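/- arXiv:1703.07147 — 3 statements merged into one kernel-verified Lean document; each statement's English description precedes it below -/
import Mathlib

section
/- Let T be a ℂ-linear triangulated category of finite type and M₁, M₂ objects of T. If M₂ ∈ ⟨M₁⟩ and M₂ ≇ 0, then 0 < δ_{T,t}(M₁, M₂) for every t ∈ ℝ. -/
/-!
The objects `Y` with `Hom(N, Y) = 0` are closed under extensions and retracts. Hence a tower that
builds `N ⊞ N'` from shifts `M⟦nᵢ⟧`, with `N` nonzero, has to use some `nᵢ` with
`Hom(N, M⟦nᵢ⟧) ≠ 0`, and the single summand `exp (nᵢ t)` bounds its cost from below. If `n t` is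
bounded below by `b` over all such degrees `n` (in particular if there are finitely many of them),
then every tower costs at least `exp b`.
-/

open CategoryTheory Limits Pretriangulated Filter
open scoped ENNReal

universe u v u₂ v₂

namespace CatEntropy

section Defs

variable (C : Type u) [Category.{v} C] [Preadditive C] [HasZeroObject C]
  [HasShift C ℤ] [∀ n : ℤ, (shiftFunctor C n).Additive] [Pretriangulated C]

/-- `C` is of finite type: for all objects `M, N`, the total dimension
`Σ_{n ∈ ℤ} dim_ℂ Hom(M, N⟦n⟧)` is finite. -/
def IsFiniteType [Linear ℂ C] : Prop :=
  ∀ M N : C, {n : ℤ | ¬ Subsingleton (M ⟶ N⟦n⟧)}.Finite ∧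
    ∀ n : ℤ, FiniteDimensional ℂ (M ⟶ N⟦n⟧)

/-- A set of objects is a thick triangulated subcategory: closed under isomorphisms,
shifts, cones and direct summands. -/
structure IsThick (S : Set C) : Prop where
  mem_of_iso : ∀ {X Y : C}, (X ≅ Y) → X ∈ S → Y ∈ S
  shift_mem : ∀ (X : C) (n : ℤ), X ∈ S → X⟦n⟧ ∈ S
  cone_mem : ∀ (T : Triangle C), T ∈ (distTriang C) → T.obj₁ ∈ S → T.obj₂ ∈ S → T.obj₃ ∈ S
  summand_mem : ∀ (X Y : C), (X ⊞ Y) ∈ S → X ∈ S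

/-- `⟨M⟩`, the smallest thick triangulated subcategory containing `M`. -/
def thickClosure (M : C) : Set C :=
  ⋂₀ {S : Set C | IsThick C S ∧ M ∈ S}

/-- `G` is a split-generator of `C` if `⟨G⟩ = C`. -/
def IsSplitGenerator (G : C) : Prop := ∀ X : C, X ∈ thickClosure C G

open Classical in
/-- The complexity `δ_{C,t}(M, N)` of `N` with respect to `M`. -/
noncomputable def complexity (t : ℝ) (M N : C) : ℝ≥0∞ :=
  if IsZero N then 0
  else if N ∈ thickClosure C M then
    sInf {c : ℝ≥0∞ |
      ∃ (p : ℕ) (_ : 0 < p) (n : Fin p → ℤ) (A : Fin (p + 1) → C) (N' : C),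
        IsZero (A 0) ∧ Nonempty (A (Fin.last p) ≅ N ⊞ N') ∧
        (∀ i : Fin p,
          ∃ (f : A i.castSucc ⟶ A i.succ) (g : A i.succ ⟶ M⟦n i⟧)
            (h : M⟦n i⟧ ⟶ (A i.castSucc)⟦(1 : ℤ)⟧),
              Triangle.mk f g h ∈ (distTriang C)) ∧
        c = ∑ i : Fin p, ENNReal.ofReal (Real.exp ((n i : ℝ) * t))}
  else ⊤

/-- Iterated composition `Fⁿ` of an endofunctor. -/
def iter (F : C ⥤ C) : ℕ → C ⥤ C
  | 0 => 𝟭 C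
  | n + 1 => iter F n ⋙ F

/-- The entropy `h_t(F)` of an endofunctor `F`, computed with the split-generator `G`
(the defining limit exists and agrees with the `limsup` used here). -/
noncomputable def entropy (F : C ⥤ C) (G : C) (t : ℝ) : EReal :=
  Filter.atTop.limsup fun m : ℕ =>
    (((m : ℝ)⁻¹ : ℝ) : EReal) * (complexity C t G ((iter C F m).obj G)).log

end Defs

section Towers

variable {C : Type u} [Category.{v} C] [Preadditive C] [HasZeroObject C]
  [HasShift C ℤ] [∀ n : ℤ, (shiftFunctor C n).Additive] [Pretriangulated C]

/-- `A` is a tower over a zero object whose successive cones are the objects `B i`: the iterated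
extensions over which `complexity` takes the infimum, with arbitrary objects `B i` in place of
shifts of a fixed one. -/
structure IsTower {p : ℕ} (A : Fin (p + 1) → C) (B : Fin p → C) : Prop where
  isZero_obj_zero : IsZero (A 0)
  exists_distTriang : ∀ i : Fin p,
    ∃ (f : A i.castSucc ⟶ A i.succ) (g : A i.succ ⟶ B i) (h : B i ⟶ (A i.castSucc)⟦(1 : ℤ)⟧),
      Triangle.mk f g h ∈ (distTriang C)

lemma IsTower.prop_of_forall_prop {p : ℕ} {A : Fin (p + 1) → C} {B : Fin p → C}
    (hAB : IsTower A B) (P : ObjectProperty C) [P.ContainsZero] [P.IsClosedUnderIsomorphisms]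
    [P.IsTriangulatedClosed₂] (hB : ∀ i, P (B i)) (i : Fin (p + 1)) : P (A i) := by
  induction i using Fin.induction with
  | zero => exact P.prop_of_isZero hAB.isZero_obj_zero
  | succ i ih =>
    obtain ⟨f, g, h, hT⟩ := hAB.exists_distTriang i
    exact P.ext_of_isTriangulatedClosed₂ _ hT ih (hB i)

lemma IsTower.exists_not_subsingleton_hom {p : ℕ} {A : Fin (p + 1) → C} {B : Fin p → C}
    (hAB : IsTower A B) {X : C} {j : Fin (p + 1)} (r : Retract X (A j)) (hX : ¬ IsZero X) :
    ∃ i, ¬ Subsingleton (X ⟶ B i) := by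
  by_contra! hB
  have hA : (ObjectProperty.singleton X).rightOrthogonal (A j) := by
    refine hAB.prop_of_forall_prop _ (fun i Y f hY ↦ ?_) j
    obtain rfl := (ObjectProperty.singleton_iff X Y).1 hY
    exact Subsingleton.elim f 0
  have hi : r.i = 0 := hA r.i ((ObjectProperty.singleton_iff X X).2 rfl)
  exact hX ((IsZero.iff_id_eq_zero X).2 (by rw [← r.retract, hi, zero_comp]))

/-- The degrees `n` in which `Hom(N, M⟦n⟧)` is nonzero. A tower of shifts of `M` that builds a
nonzero `N` up to a direct summand involves at least one of them. -/
def homDegrees (N M : C) : Set ℤ := {n | ¬ Subsingleton (N ⟶ M⟦n⟧)}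

lemma le_complexity {M N : C} (hN : ¬ IsZero N) {t : ℝ} {c : ℝ≥0∞}
    (hc : ∀ n ∈ homDegrees N M, c ≤ ENNReal.ofReal (Real.exp ((n : ℝ) * t))) :
    c ≤ complexity C t M N := by
  rw [complexity, if_neg hN]
  split_ifs
  · refine le_sInf ?_
    rintro _ ⟨p, -, n, A, N', hA₀, ⟨e⟩, hA, rfl⟩
    have hAM : IsTower A fun i ↦ M⟦n i⟧ := ⟨hA₀, hA⟩
    have r : Retract N (A (Fin.last p)) :=
      (BinaryBiproduct.bicone N N').retract_left.trans (.ofIso e.symm)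
    obtain ⟨i, hi⟩ := hAM.exists_not_subsingleton_hom r hN
    exact (hc (n i) hi).trans (Finset.single_le_sum_of_canonicallyOrdered
      (f := fun i ↦ ENNReal.ofReal (Real.exp ((n i : ℝ) * t))) (Finset.mem_univ i))
  · exact le_top

end Towers

theorem statement_1_general {C : Type u} [Category.{v} C] [Preadditive C] [HasZeroObject C]
    [HasShift C ℤ] [∀ n : ℤ, (shiftFunctor C n).Additive] [Pretriangulated C]
    {M N : C} (hN : ¬ IsZero N) {t : ℝ}
    (hbdd : BddBelow ((fun n : ℤ ↦ (n : ℝ) * t) '' homDegrees N M)) :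
    0 < complexity C t M N := by
  obtain ⟨b, hb⟩ := hbdd
  calc
    0 < ENNReal.ofReal (Real.exp b) := ENNReal.ofReal_pos.2 b.exp_pos
    _ ≤ complexity C t M N := le_complexity hN fun n hn ↦
      ENNReal.ofReal_le_ofReal (Real.exp_le_exp.2 (hb ⟨n, hn, rfl⟩))

/-- If `M₂ ∈ ⟨M₁⟩` and `M₂ ≇ 0` then `0 < δ_(T,t)(M₁, M₂)` for all `t`. -/
theorem statement_1 {C : Type u} [Category.{v} C] [Preadditive C] [HasZeroObject C]
    [HasShift C ℤ] [∀ n : ℤ, (shiftFunctor C n).Additive] [Pretriangulated C] [Linear ℂ C]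
    (hC : ∃ X : C, ¬ IsZero X) (hft : IsFiniteType C)
    (M₁ M₂ : C) (h₁ : M₂ ∈ thickClosure C M₁) (h₂ : ¬ IsZero M₂) (t : ℝ) :
    0 < complexity C t M₁ M₂ :=
  statement_1_general h₂ ((hft M₂ M₁).1.image _).bddBelow

end CatEntropy
end

section
/- Let T be a ℂ-linear triangulated category of finite type and M₁, M₂, M₃ objects of T with M₂ ≇ 0. Then δ_{T,t}(M₁, M₃) ≤ δ_{T,t}(M₁, M₂) · δ_{T,t}(M₂, M₃) for every t ∈ ℝ (with the usual extended arithmetic on ℝ_{≥0} ∪ {∞}). -/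
/-!
Everything rests on the substitution of towers. If `M₂` is a retract of the end `B` of a tower over
`M₁`, then each step `M₂⟦n⟧` of a tower over `M₂` may be replaced by `B⟦n⟧`, that is, by steps
`M₁⟦m + n⟧`. Since `exp ((m + n) t) = exp (m t) * exp (n t)`, the cost of the resulting tower is the
product of the two costs. Passing to infima is harmless because a tower over `M` ending in an object
with a nonzero retract `N` must contain one of the finitely many steps `M⟦n⟧` with
`Hom(M⟦n⟧, N) ≠ 0`: the infima are nonzero, which excludes the product `0 * ⊤`.

Substitution requires re-bracketing iterated extensions, usually done with the octahedral axiom.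
That axiom is not part of `Pretriangulated`, and a dimension count replaces it. For triangles
`A ⟶ X ⟶ W` and `B ⟶ W ⟶ D`, let `E` be the fibre of `B ⟶ W ⟶ A⟦1⟧`. The cone `Z` of any comparison
map `E ⟶ X` satisfies `dim Hom(P, Z) = dim Hom(P, D)` for all `P`, and in finite type this forces
`Z ≅ D`.

To see this, let `dim Hom(P, Z) = dim Hom(P, W)` for all `P`. The long exact sequence of the cone of
`f : A ⟶ B` determines the sum of the ranks of `f` and `f⟦1⟧` on `Hom(-, Z)`; as `Hom(A⟦k⟧, Z) = 0`
for large `k`, every morphism acts with equal ranks on `Hom(-, Z)` and on `Hom(-, W)`. In particular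
a morphism `f : Z ⟶ B` through which all morphisms `Z ⟶ W` factor is a split monomorphism. Hence
`𝟙 Z` is a sum of composites `Z ⟶ W ⟶ Z`, and therefore every `End W`-linear map from `Hom(Z, W)` to
a quotient `End W ⧸ I` is induced by some `W ⟶ Z`. This bounds the dimension of the space of such
maps by that of `End W ⧸ I`, so that modulo its radical `Hom(Z, W)` contains each simple module at
most as often as `End W` does. Thus `Hom(Z, W)` is generated by a single `w : Z ⟶ W`; this `w` is a
split monomorphism, and the equality of dimensions makes it an isomorphism.
-/

open CategoryTheory Limits Pretriangulated Filter
open scoped ENNReal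

universe u v u₂ v₂

namespace CatEntropy

/-! ### Cyclic modules over finite-dimensional algebras -/

section CyclicModules

open Module

theorem exists_smul_eq_zero_smul_ne_zero {R N S : Type*} [Ring R] [AddCommGroup N] [Module R N]
    [AddCommGroup S] [Module R S] [IsSemisimpleModule R N] {x : N} {s : S}
    (h : ∀ f : N →ₗ[R] S, f x ≠ s) : ∃ r : R, r • x = 0 ∧ r • s ≠ 0 := by
  by_contra! hr
  have hker : (LinearMap.toSpanSingleton R N x).ker ≤ (LinearMap.toSpanSingleton R S s).ker :=
    fun r => by simpa using hr r
  obtain ⟨f, hf⟩ := IsSemisimpleModule.extension_property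
    ((LinearMap.toSpanSingleton R N x).ker.liftQ _ le_rfl)
    (LinearMap.ker_eq_bot.1 (Submodule.ker_liftQ_eq_bot _ _ _ le_rfl))
    ((LinearMap.toSpanSingleton R N x).ker.liftQ _ hker)
  exact h f (by simpa using LinearMap.congr_fun hf (Submodule.Quotient.mk 1))

theorem exists_span_singleton_lt {R N S : Type*} [Ring R] [AddCommGroup N] [Module R N]
    [AddCommGroup S] [Module R S] [IsSemisimpleModule R N] [IsSimpleModule R S] {x : N} {s : S}
    (h : ∀ f : N →ₗ[R] S, f x ≠ s) {q : N →ₗ[R] S} (hq : q ≠ 0) (hqx : q x = 0) :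
    ∃ y : N, R ∙ x < R ∙ y := by
  obtain ⟨r, hrx, hrs⟩ := exists_smul_eq_zero_smul_ne_zero h
  obtain ⟨σ, hσ⟩ := IsSemisimpleModule.lifting_property q (LinearMap.surjective_of_ne_zero hq)
    LinearMap.id
  have hqσ (u : S) : q (σ u) = u := LinearMap.congr_fun hσ u
  -- `r` kills `x` but not `s`, and `r • s` generates the simple module `S`
  have hσs (u : S) : σ u ∈ R ∙ (x + σ s) := by
    obtain ⟨a, rfl⟩ := IsSimpleModule.toSpanSingleton_surjective R hrs u
    refine Submodule.mem_span_singleton.2 ⟨a * r, ?_⟩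
    simp [mul_smul, hrx]
  have hx : x ∈ R ∙ (x + σ s) := by
    simpa using sub_mem (Submodule.mem_span_singleton_self (R := R) (x + σ s)) (hσs s)
  refine ⟨x + σ s, lt_of_le_of_ne ((Submodule.span_singleton_le_iff_mem _ _).2 hx) fun heq => ?_⟩
  obtain ⟨a, ha⟩ := Submodule.mem_span_singleton.1 (heq ▸ hσs (r • s))
  exact hrs (by rw [← hqσ (r • s), ← ha, map_smul, hqx, smul_zero])

variable {K R Q : Type*} [Field K] [Ring R] [Algebra K R]
  [AddCommGroup Q] [Module K Q] [Module R Q] [IsScalarTower K R Q] [FiniteDimensional K Q]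

theorem finiteDimensional_linearMap {S : Type*} [AddCommGroup S] [Module K S] [Module R S]
    [IsScalarTower K R S] [FiniteDimensional K S] : FiniteDimensional K (Q →ₗ[R] S) :=
  FiniteDimensional.of_injective (LinearMap.restrictScalarsₗ K R Q S K)
    (LinearMap.restrictScalars_injective K)

variable [FiniteDimensional K R]

theorem exists_span_singleton_eq_top_of_isSemisimpleModule [IsSemisimpleModule R Q]
    (h : ∀ I : Ideal R, I.IsMaximal → finrank K (Q →ₗ[R] R ⧸ I) ≤ finrank K (R ⧸ I)) :
    ∃ x : Q, R ∙ x = ⊤ := by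
  have : IsNoetherian R Q := isNoetherian_of_tower K inferInstance
  obtain ⟨_, ⟨x, rfl⟩, hmax⟩ := wellFounded_gt.has_min (Set.range fun x : Q => R ∙ x) ⟨_, 0, rfl⟩
  refine ⟨x, by_contra fun hx => ?_⟩
  obtain ⟨P, hP, hxP⟩ := (eq_top_or_exists_le_coatom (R ∙ x)).resolve_left hx
  obtain ⟨I, hI, ⟨e⟩⟩ := isSimpleModule_iff_quot_maximal.1 (isSimpleModule_iff_isCoatom.2 hP)
  have : IsSimpleModule R (R ⧸ I) := isSimpleModule_iff_isCoatom.2 hI.1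
  have : FiniteDimensional K (Q →ₗ[R] R ⧸ I) := finiteDimensional_linearMap
  let q : Q →ₗ[R] R ⧸ I := e ∘ₗ P.mkQ
  have hqx : q x = 0 := by
    simpa [q] using hxP (Submodule.mem_span_singleton_self x)
  have hq : q ≠ 0 := fun h0 => hP.1 <| by
    rw [← P.ker_mkQ, ← LinearMap.ker_eq_top.2 h0, LinearEquiv.ker_comp]
  let ev : (Q →ₗ[R] R ⧸ I) →ₗ[K] R ⧸ I := LinearMap.applyₗ' K x
  have hev : ¬ Function.Surjective ev := fun hsurj =>
    have hdim := (h I hI).antisymm (LinearMap.finrank_le_finrank_of_surjective hsurj)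
    hq ((map_eq_zero_iff ev
      ((LinearMap.injective_iff_surjective_of_finrank_eq_finrank hdim).2 hsurj)).1 hqx)
  obtain ⟨s, hs⟩ := not_forall.1 hev
  obtain ⟨y, hy⟩ := exists_span_singleton_lt (not_exists.1 hs) hq hqx
  exact hmax _ ⟨y, rfl⟩ hy

theorem exists_span_singleton_eq_top
    (h : ∀ I : Ideal R, I.IsMaximal → finrank K (Q →ₗ[R] R ⧸ I) ≤ finrank K (R ⧸ I)) :
    ∃ x : Q, R ∙ x = ⊤ := by
  have : IsNoetherian R Q := isNoetherian_of_tower K inferInstance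
  have : IsArtinian R Q := isArtinian_of_tower K inferInstance
  set J := Module.jacobson R Q
  have : IsSemisimpleModule R (Q ⧸ J) :=
    (IsArtinian.isSemisimpleModule_iff_jacobson R _).2 (Module.jacobson_quotient_jacobson R Q)
  have hJQ (I : Ideal R) (hI : I.IsMaximal) :
      finrank K ((Q ⧸ J) →ₗ[R] R ⧸ I) ≤ finrank K (R ⧸ I) := by
    have : FiniteDimensional K (Q →ₗ[R] R ⧸ I) := finiteDimensional_linearMap
    exact (LinearMap.finrank_le_finrank_of_injective (f := LinearMap.lcomp K (R ⧸ I) J.mkQ)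
      (LinearMap.lcomp_injective_of_surjective _ J.mkQ_surjective)).trans (h I hI)
  obtain ⟨y, hy⟩ := exists_span_singleton_eq_top_of_isSemisimpleModule (K := K) hJQ
  obtain ⟨x, rfl⟩ := J.mkQ_surjective y
  refine ⟨x, by_contra fun hx => ?_⟩
  obtain ⟨P, hP, hxP⟩ := (eq_top_or_exists_le_coatom (R ∙ x)).resolve_left hx
  have hJP : J ≤ P := sInf_le hP
  refine hP.1 (top_le_iff.1 ?_)
  rw [← Submodule.comap_top J.mkQ, ← hy, ← Set.image_singleton, ← Submodule.map_span,
    Submodule.comap_map_mkQ]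
  exact sup_le hJP hxP

end CyclicModules

/-! ### Ranks of maps between morphism spaces -/

section HomRanks

open Module

variable {K : Type*} [Field K] {C : Type u} [Category.{v} C] [Preadditive C] [Linear K C]

variable (K) in
/-- The rank of the map `f^* : Hom(B, Z) → Hom(A, Z)` induced by `f : A ⟶ B`. -/
noncomputable def precompRank (Z : C) {A B : C} (f : A ⟶ B) : ℕ :=
  finrank K (Linear.leftComp K Z f).range

variable (K) in
/-- The rank of the map `f_* : Hom(P, X) → Hom(P, Y)` induced by `f : X ⟶ Y`. -/
noncomputable def postcompRank (P : C) {X Y : C} (f : X ⟶ Y) : ℕ :=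
  finrank K (Linear.rightComp K P f).range

theorem precompRank_neg (Z : C) {A B : C} (f : A ⟶ B) :
    precompRank K Z (-f) = precompRank K Z f := by
  have hneg : Linear.leftComp K Z (-f) = -Linear.leftComp K Z f := by ext; simp
  rw [precompRank, hneg, LinearMap.range_neg, precompRank]

theorem postcompRank_neg (P : C) {X Y : C} (f : X ⟶ Y) :
    postcompRank K P (-f) = postcompRank K P f := by
  have hneg : Linear.rightComp K P (-f) = -Linear.rightComp K P f := by ext; simp
  rw [postcompRank, hneg, LinearMap.range_neg, postcompRank]

theorem postcompRank_comp_add {P X Y Z U : C} [FiniteDimensional K (P ⟶ Y)] {f : X ⟶ Y} {g : Y ⟶ Z}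
    {u : U ⟶ Y} (h : (Linear.rightComp K P u).range =
      (Linear.rightComp K P f).range ⊓ (Linear.rightComp K P g).ker) :
    postcompRank K P (f ≫ g) + postcompRank K P u = postcompRank K P f := by
  have hcomp : Linear.rightComp K P (f ≫ g) = Linear.rightComp K P g ∘ₗ Linear.rightComp K P f := by
    ext; simp
  let gf := (Linear.rightComp K P g).domRestrict (Linear.rightComp K P f).range
  have hrange : (Linear.rightComp K P (f ≫ g)).range = gf.range := by
    rw [LinearMap.range_domRestrict, hcomp, LinearMap.range_comp]
  have hker : gf.ker.map (Submodule.subtype _) = (Linear.rightComp K P u).range := by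
    rw [h, LinearMap.ker_domRestrict, Submodule.map_comap_subtype]
  rw [postcompRank, postcompRank, postcompRank, hrange, ← hker, Submodule.finrank_map_subtype_eq,
    gf.finrank_range_add_finrank_ker]

variable [HasZeroObject C] [HasShift C ℤ] [∀ n : ℤ, (shiftFunctor C n).Additive] [Pretriangulated C]

theorem ker_leftComp_mor₁ (Z : C) {T : Triangle C} (hT : T ∈ distTriang C) :
    (Linear.leftComp K Z T.mor₁).ker = (Linear.leftComp K Z T.mor₂).range := by
  ext f
  refine ⟨fun hf => (T.yoneda_exact₂ hT f hf).imp fun _ hg => hg.symm, ?_⟩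
  rintro ⟨g, rfl⟩
  simp [comp_distTriang_mor_zero₁₂_assoc T hT]

theorem ker_rightComp_mor₂ (P : C) {T : Triangle C} (hT : T ∈ distTriang C) :
    (Linear.rightComp K P T.mor₂).ker = (Linear.rightComp K P T.mor₁).range := by
  ext f
  refine ⟨fun hf => (T.coyoneda_exact₂ hT f hf).imp fun _ hg => hg.symm, ?_⟩
  rintro ⟨g, rfl⟩
  simp [comp_distTriang_mor_zero₁₂ T hT]

variable [∀ X Y : C, FiniteDimensional K (X ⟶ Y)]

theorem finrank_hom_obj₂_left (Z : C) {T : Triangle C} (hT : T ∈ distTriang C) :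
    finrank K (T.obj₂ ⟶ Z) = precompRank K Z T.mor₁ + precompRank K Z T.mor₂ := by
  rw [← (Linear.leftComp K Z T.mor₁).finrank_range_add_finrank_ker, ker_leftComp_mor₁ Z hT,
    precompRank, precompRank]

theorem finrank_hom_obj₂_right (P : C) {T : Triangle C} (hT : T ∈ distTriang C) :
    finrank K (P ⟶ T.obj₂) = postcompRank K P T.mor₁ + postcompRank K P T.mor₂ := by
  rw [← (Linear.rightComp K P T.mor₂).finrank_range_add_finrank_ker, ker_rightComp_mor₂ P hT,
    postcompRank, postcompRank, add_comm]

theorem finrank_hom_cone_left (Z : C) {A B D : C} {f : A ⟶ B} {g : B ⟶ D} {h : D ⟶ A⟦(1 : ℤ)⟧}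
    (hT : Triangle.mk f g h ∈ distTriang C) :
    finrank K (B ⟶ Z) + finrank K (A⟦(1 : ℤ)⟧ ⟶ Z) =
      finrank K (D ⟶ Z) + (precompRank K Z f + precompRank K Z (f⟦(1 : ℤ)⟧')) := by
  have hT₁ := rot_of_distTriang _ hT
  have hB : finrank K (B ⟶ Z) = precompRank K Z f + precompRank K Z g :=
    finrank_hom_obj₂_left Z hT
  have hD : finrank K (D ⟶ Z) = precompRank K Z g + precompRank K Z h :=
    finrank_hom_obj₂_left Z hT₁
  have hA : finrank K (A⟦(1 : ℤ)⟧ ⟶ Z) = precompRank K Z h + precompRank K Z (-f⟦(1 : ℤ)⟧') :=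
    finrank_hom_obj₂_left Z (rot_of_distTriang _ hT₁)
  rw [precompRank_neg] at hA
  omega

theorem finrank_hom_cone_right (P : C) {X Y Z : C} {f : X ⟶ Y} {g : Y ⟶ Z} {h : Z ⟶ X⟦(1 : ℤ)⟧}
    (hT : Triangle.mk f g h ∈ distTriang C) :
    finrank K (P ⟶ Y) + finrank K (P ⟶ X⟦(1 : ℤ)⟧) =
      finrank K (P ⟶ Z) + (postcompRank K P f + postcompRank K P (f⟦(1 : ℤ)⟧')) := by
  have hT₁ := rot_of_distTriang _ hT
  have hY : finrank K (P ⟶ Y) = postcompRank K P f + postcompRank K P g :=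
    finrank_hom_obj₂_right P hT
  have hZ : finrank K (P ⟶ Z) = postcompRank K P g + postcompRank K P h :=
    finrank_hom_obj₂_right P hT₁
  have hX : finrank K (P ⟶ X⟦(1 : ℤ)⟧) =
      postcompRank K P h + postcompRank K P (-f⟦(1 : ℤ)⟧') :=
    finrank_hom_obj₂_right P (rot_of_distTriang _ hT₁)
  rw [postcompRank_neg] at hX
  omega

end HomRanks

section FiniteType

open Module

variable (K : Type*) [Field K] (C : Type u) [Category.{v} C] [Preadditive C] [HasShift C ℤ]
  [Linear K C]

/-- The notion `IsFiniteType` over an arbitrary field `K`: the total dimension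
`Σ_{n ∈ ℤ} dim_K Hom(M, N⟦n⟧)` is finite for all objects `M, N`. -/
def IsFiniteTypeOver : Prop :=
  ∀ M N : C, {n : ℤ | ¬ Subsingleton (M ⟶ N⟦n⟧)}.Finite ∧
    ∀ n : ℤ, FiniteDimensional K (M ⟶ N⟦n⟧)

variable {K C}

theorem IsFiniteTypeOver.finiteDimensional_hom (hft : IsFiniteTypeOver K C) (M N : C) :
    FiniteDimensional K (M ⟶ N) :=
  have := (hft M N).2 0
  Module.Finite.equiv (Linear.homCongr K (Iso.refl M) ((shiftFunctorZero C ℤ).app N))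

theorem IsFiniteTypeOver.finite_setOf_not_subsingleton (hft : IsFiniteTypeOver K C) (M N : C) :
    {n : ℤ | ¬ Subsingleton (M⟦n⟧ ⟶ N)}.Finite := by
  refine ((hft M N).1.preimage neg_injective.injOn).subset fun n hn => ?_
  exact mt ((shiftEquiv C n).toAdjunction.homEquiv M N).subsingleton_congr.2 hn

theorem IsFiniteTypeOver.exists_subsingleton_shift_hom (hft : IsFiniteTypeOver K C) (M N : C) :
    ∃ k : ℕ, Subsingleton (M⟦(k : ℤ)⟧ ⟶ N) := by
  obtain ⟨k, hk⟩ :=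
    ((hft.finite_setOf_not_subsingleton M N).preimage Nat.cast_injective.injOn).exists_notMem
  exact ⟨k, not_not.1 hk⟩

variable [HasZeroObject C] [∀ n : ℤ, (shiftFunctor C n).Additive] [Pretriangulated C]

theorem precompRank_eq_of_subsingleton [∀ X Y : C, FiniteDimensional K (X ⟶ Y)] {Z W : C}
    (hdim : ∀ P : C, finrank K (P ⟶ Z) = finrank K (P ⟶ W)) (k : ℕ) {A B : C} (f : A ⟶ B)
    (hA : Subsingleton (A⟦(k : ℤ)⟧ ⟶ Z)) : precompRank K Z f = precompRank K W f := by
  induction k generalizing A B with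
  | zero =>
    have hZ : finrank K (A ⟶ Z) = 0 := by
      have : Subsingleton (A ⟶ Z) :=
        (((shiftFunctorZero C ℤ).app A).homCongr (Iso.refl Z)).subsingleton_congr.1 hA
      exact finrank_zero_of_subsingleton
    have hZf : precompRank K Z f ≤ finrank K (A ⟶ Z) := Submodule.finrank_le _
    have hWf : precompRank K W f ≤ finrank K (A ⟶ W) := Submodule.finrank_le _
    rw [← hdim A] at hWf
    omega
  | succ k ih =>
    have hA₁ : Subsingleton (A⟦(1 : ℤ)⟧⟦(k : ℤ)⟧ ⟶ Z) :=
      (((shiftFunctorAdd' C 1 (k : ℤ) (k + 1 : ℕ) (by push_cast; ring)).app A).homCongr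
        (Iso.refl Z)).subsingleton_congr.1 hA
    have hf₁ := ih (f⟦(1 : ℤ)⟧') hA₁
    obtain ⟨D, g, h, hT⟩ := distinguished_cocone_triangle f
    have hZ := finrank_hom_cone_left (K := K) Z hT
    have hW := finrank_hom_cone_left (K := K) W hT
    simp only [hdim] at hZ
    omega

theorem precompRank_eq (hft : IsFiniteTypeOver K C) {Z W : C}
    (hdim : ∀ P : C, finrank K (P ⟶ Z) = finrank K (P ⟶ W)) {A B : C} (f : A ⟶ B) :
    precompRank K Z f = precompRank K W f :=
  have := hft.finiteDimensional_hom
  have ⟨k, hk⟩ := hft.exists_subsingleton_shift_hom A Z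
  precompRank_eq_of_subsingleton hdim k f hk

end FiniteType

/-! ### Objects determined by the dimensions of their morphism spaces -/

section HomDimensions

open Module

instance {K : Type*} [Field K] {C : Type u} [Category.{v} C] [Preadditive C] [Linear K C]
    (Z W : C) : IsScalarTower K (End W) (Z ⟶ W) where
  smul_assoc c e q := Linear.comp_smul _ _ _ q c e.asHom

theorem mem_span_range_iff_exists_biproduct_lift_comp {C : Type u} [Category.{v} C]
    [Preadditive C] {W : C} {n : ℕ} [HasBiproduct fun _ : Fin n => W] (s : Fin n → End W)
    (x : End W) :
    x ∈ Submodule.span (End W) (Set.range s) ↔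
      ∃ w : (⨁ fun _ : Fin n => W) ⟶ W, biproduct.lift (fun i => (s i).asHom) ≫ w = x := by
  rw [Submodule.mem_span_range_iff_exists_fun]
  constructor
  · rintro ⟨c, rfl⟩
    exact ⟨biproduct.desc c, biproduct.lift_desc⟩
  · rintro ⟨w, rfl⟩
    refine ⟨fun i => biproduct.ι (fun _ : Fin n => W) i ≫ w, ?_⟩
    have hw : w = biproduct.desc fun i => biproduct.ι (fun _ : Fin n => W) i ≫ w := by ext; simp
    conv_rhs => rw [hw, biproduct.lift_desc]
    rfl

variable {K : Type*} [Field K] {C : Type u} [Category.{v} C] [Preadditive C] [Linear K C]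

theorem exists_forall_apply_eq_mk_comp {Z W : C} {n : ℕ} {a : Fin n → (Z ⟶ W)}
    {b : Fin n → (W ⟶ Z)} (hab : ∑ i, a i ≫ b i = 𝟙 Z) {I : Ideal (End W)}
    (θ : (Z ⟶ W) →ₗ[End W] End W ⧸ I) :
    ∃ z : W ⟶ Z, ∀ q, θ q = I.mkQ (End.of (z ≫ q)) := by
  choose y hy using fun i => I.mkQ_surjective (θ (a i))
  refine ⟨∑ i, (y i).asHom ≫ b i, fun q => ?_⟩
  have hq : q = ∑ i, End.of (b i ≫ q) • a i := by
    simp only [End.smul_right, ← Category.assoc, ← Preadditive.sum_comp, hab, Category.id_comp]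
  have hz : End.of ((∑ i, (y i).asHom ≫ b i) ≫ q) = ∑ i, End.of (b i ≫ q) • y i := by
    simp [Preadditive.sum_comp]
  rw [hz]
  conv_lhs => rw [hq]
  simp only [map_sum, map_smul, hy]

variable (K) in
/-- The left ideal `I` being fixed, `z : W ⟶ Z` induces the `End W`-linear map `q ↦ [z ≫ q]` from
`Hom(Z, W)` to `End W ⧸ I`. -/
def compQuotient (Z : C) {W : C} (I : Ideal (End W)) :
    (W ⟶ Z) →ₗ[K] (Z ⟶ W) →ₗ[End W] End W ⧸ I where
  toFun z := I.mkQ ∘ₗ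
    { toFun q := End.of (z ≫ q)
      map_add' := Preadditive.comp_add _ _ _ z
      map_smul' r q := (Category.assoc z q r.asHom).symm }
  map_add' z z' := by
    ext q
    exact congrArg I.mkQ (Preadditive.add_comp _ _ _ z z' q)
  map_smul' c z := by
    ext q
    exact congrArg I.mkQ (Linear.smul_comp _ _ _ c z q)

variable [HasZeroObject C] [HasShift C ℤ] [∀ n : ℤ, (shiftFunctor C n).Additive] [Pretriangulated C]

theorem exists_comp_eq_id_of_forall_factors (hft : IsFiniteTypeOver K C) {Z W : C}
    (hdim : ∀ P : C, finrank K (P ⟶ Z) = finrank K (P ⟶ W)) {B : C} {f : Z ⟶ B}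
    (hf : ∀ g : Z ⟶ W, ∃ b : B ⟶ W, f ≫ b = g) : ∃ r : B ⟶ Z, f ≫ r = 𝟙 Z := by
  have := hft.finiteDimensional_hom Z Z
  have hW : (Linear.leftComp K W f).range = ⊤ := LinearMap.range_eq_top.2 hf
  have hZ : (Linear.leftComp K Z f).range = ⊤ := Submodule.eq_top_of_finrank_eq <|
    calc precompRank K Z f = precompRank K W f := precompRank_eq hft hdim f
      _ = finrank K (Z ⟶ W) := by rw [precompRank, hW, finrank_top]
      _ = finrank K (Z ⟶ Z) := (hdim Z).symm
  exact LinearMap.range_eq_top.1 hZ (𝟙 Z)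

theorem exists_sum_comp_eq_id (hft : IsFiniteTypeOver K C) {Z W : C}
    (hdim : ∀ P : C, finrank K (P ⟶ Z) = finrank K (P ⟶ W)) :
    ∃ (n : ℕ) (a : Fin n → (Z ⟶ W)) (b : Fin n → (W ⟶ Z)), ∑ i, a i ≫ b i = 𝟙 Z := by
  have := hft.finiteDimensional_hom Z W
  let a := finBasis K (Z ⟶ W)
  obtain ⟨r, hr⟩ := exists_comp_eq_id_of_forall_factors hft hdim (f := biproduct.lift a) fun g =>
    ⟨biproduct.desc fun i => a.repr g i • 𝟙 W, by simp [biproduct.lift_desc, a.sum_repr g]⟩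
  refine ⟨_, a, fun i => biproduct.ι (fun _ => W) i ≫ r, ?_⟩
  rw [← hr, ← biproduct.lift_desc]
  congr 1
  ext
  simp

theorem finrank_linearMap_quotient_le (hft : IsFiniteTypeOver K C) {Z W : C}
    (hdim : ∀ P : C, finrank K (P ⟶ Z) = finrank K (P ⟶ W)) (I : Ideal (End W)) :
    finrank K ((Z ⟶ W) →ₗ[End W] End W ⧸ I) ≤ finrank K (End W ⧸ I) := by
  have hfin := hft.finiteDimensional_hom
  have : FiniteDimensional K (End W) := hfin W W
  have : IsNoetherianRing (End W) := IsNoetherianRing.of_finite K (End W)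
  obtain ⟨n, s, rfl⟩ := Submodule.fg_iff_exists_fin_generating_family.1
    (IsNoetherian.noetherian I)
  set I := Submodule.span (End W) (Set.range s)
  let f : W ⟶ ⨁ fun _ : Fin n => W := biproduct.lift fun i => (s i).asHom
  have hI (x : End W) : x ∈ I ↔ ∃ w, f ≫ w = x := mem_span_range_iff_exists_biproduct_lift_comp s x
  have hIK : (Linear.leftComp K W f).range = I.restrictScalars K := by
    ext x
    exact (hI x).symm
  have hsurj : Function.Surjective (compQuotient K Z I) := fun θ => by
    obtain ⟨m, a, b, hab⟩ := exists_sum_comp_eq_id hft hdim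
    obtain ⟨z, hz⟩ := exists_forall_apply_eq_mk_comp hab θ
    exact ⟨z, LinearMap.ext fun q => (hz q).symm⟩
  have hker : (Linear.leftComp K Z f).range ≤ (compQuotient K Z I).ker := by
    rintro _ ⟨w, rfl⟩
    ext q
    exact (Submodule.Quotient.mk_eq_zero I).2 ((hI _).2 ⟨w ≫ q, by simp⟩)
  have hHom : finrank K ((Z ⟶ W) →ₗ[End W] End W ⧸ I) + finrank K (compQuotient K Z I).ker =
      finrank K (End W) := by
    rw [← finrank_top K (_ →ₗ[End W] _), ← LinearMap.range_eq_top.2 hsurj,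
      LinearMap.finrank_range_add_finrank_ker]
    exact hdim W
  have hquot : finrank K (End W ⧸ I) + precompRank K W f = finrank K (End W) := by
    rw [← (I.restrictScalars K).finrank_quotient_add_finrank,
      (Submodule.Quotient.restrictScalarsEquiv K I).finrank_eq, ← hIK]
    rfl
  have hrank : precompRank K W f ≤ finrank K (compQuotient K Z I).ker := by
    rw [← precompRank_eq hft hdim]
    exact Submodule.finrank_mono hker
  omega

theorem nonempty_iso_of_finrank_eq (hft : IsFiniteTypeOver K C) {Z W : C}
    (hdim : ∀ P : C, finrank K (P ⟶ Z) = finrank K (P ⟶ W)) : Nonempty (Z ≅ W) := by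
  have hfin := hft.finiteDimensional_hom
  have : FiniteDimensional K (End W) := hfin W W
  obtain ⟨w, hw⟩ := exists_span_singleton_eq_top (K := K) (R := End W) (Q := Z ⟶ W)
    fun I _ => finrank_linearMap_quotient_le hft hdim I
  obtain ⟨r, hr⟩ := exists_comp_eq_id_of_forall_factors hft hdim (f := w) fun g =>
    Submodule.mem_span_singleton.1 (hw ▸ Submodule.mem_top : g ∈ Submodule.span (End W) {w})
  have hsurj : Function.Surjective (Linear.rightComp K W r) := fun g =>
    ⟨g ≫ w, by simp [hr]⟩
  have hinj : Function.Injective (Linear.rightComp K W r) :=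
    (LinearMap.injective_iff_surjective_of_finrank_eq_finrank (hdim W).symm).2 hsurj
  exact ⟨w, r, hr, hinj (by simp [hr])⟩

end HomDimensions

/-! ### Extensions and their re-bracketing -/

section Extensions

variable {C : Type u} [Category.{v} C] [Preadditive C] [HasZeroObject C]
  [HasShift C ℤ] [∀ n : ℤ, (shiftFunctor C n).Additive] [Pretriangulated C]

/-- `X` is an extension of `W` by `Y`: there is a distinguished triangle `Y ⟶ X ⟶ W ⟶ Y⟦1⟧`. -/
def IsExtension (Y X W : C) : Prop :=
  ∃ (f : Y ⟶ X) (g : X ⟶ W) (h : W ⟶ Y⟦(1 : ℤ)⟧), Triangle.mk f g h ∈ distTriang C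

theorem IsExtension.of_iso {Y X W Y' X' W' : C} (h : IsExtension Y X W) (α : Y' ≅ Y)
    (β : X' ≅ X) (γ : W' ≅ W) : IsExtension Y' X' W' := by
  obtain ⟨f, g, k, hT⟩ := h
  refine ⟨α.hom ≫ f ≫ β.inv, β.hom ≫ g ≫ γ.inv, γ.hom ≫ k ≫ α.inv⟦(1 : ℤ)⟧',
    isomorphic_distinguished _ hT _ (Triangle.isoMk _ _ α β γ ?_ ?_ ?_)⟩
  · change (α.hom ≫ f ≫ β.inv) ≫ β.hom = α.hom ≫ f
    simp
  · change (β.hom ≫ g ≫ γ.inv) ≫ γ.hom = β.hom ≫ g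
    simp
  · change (γ.hom ≫ k ≫ α.inv⟦(1 : ℤ)⟧') ≫ α.hom⟦(1 : ℤ)⟧' = γ.hom ≫ k
    simp [← Functor.map_comp]

theorem IsExtension.shift {Y X W : C} (h : IsExtension Y X W) (n : ℤ) :
    IsExtension (Y⟦n⟧) (X⟦n⟧) (W⟦n⟧) := by
  obtain ⟨f, g, k, hT⟩ := h
  exact ⟨_, _, _, Triangle.shift_distinguished _ hT n⟩

theorem exists_middle_hom {X Y Z X' Y' Z' : C} {f : X ⟶ Y} {g : Y ⟶ Z} {h : Z ⟶ X⟦(1 : ℤ)⟧}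
    {f' : X' ⟶ Y'} {g' : Y' ⟶ Z'} {h' : Z' ⟶ X'⟦(1 : ℤ)⟧}
    (hT : Triangle.mk f g h ∈ distTriang C) (hT' : Triangle.mk f' g' h' ∈ distTriang C)
    (a : X ⟶ X') (c : Z ⟶ Z') (hac : h ≫ a⟦(1 : ℤ)⟧' = c ≫ h') :
    ∃ b : Y ⟶ Y', f ≫ b = a ≫ f' ∧ g ≫ c = b ≫ g' :=
  complete_distinguished_triangle_morphism₂ _ _ hT hT' a c hac

theorem isIso_middle_of_comp_eq {X Y Z : C} {f : X ⟶ Y} {g : Y ⟶ Z} {h : Z ⟶ X⟦(1 : ℤ)⟧}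
    (hT : Triangle.mk f g h ∈ distTriang C) {b : Y ⟶ Y} (hf : f ≫ b = f) (hg : b ≫ g = g) :
    IsIso b := by
  let φ : Triangle.mk f g h ⟶ Triangle.mk f g h := Triangle.homMk _ _ (𝟙 X) b (𝟙 Z)
    (hf.trans (Category.id_comp f).symm) ((Category.comp_id g).trans hg.symm)
    (by change h ≫ (𝟙 X)⟦(1 : ℤ)⟧' = 𝟙 Z ≫ h; simp)
  exact isIso₂_of_isIso₁₃ φ hT hT (inferInstanceAs (IsIso (𝟙 X))) (inferInstanceAs (IsIso (𝟙 Z)))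

theorem distinguished_neg_shift {X Y Z : C} {f : X ⟶ Y} {g : Y ⟶ Z} {h : Z ⟶ X⟦(1 : ℤ)⟧}
    (hT : Triangle.mk f g h ∈ distTriang C) :
    Triangle.mk (-f⟦(1 : ℤ)⟧') (-g⟦(1 : ℤ)⟧') (-h⟦(1 : ℤ)⟧') ∈ distTriang C :=
  rot_of_distTriang _ (rot_of_distTriang _ (rot_of_distTriang _ hT))

theorem IsExtension.exists_retract {Y X W Y' W' : C} (h : IsExtension Y X W)
    (rY : Retract Y Y') (rW : Retract W W') :
    ∃ X' : C, Nonempty (Retract X X') ∧ IsExtension Y' X' W' := by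
  obtain ⟨f, g, k, hT⟩ := h
  obtain ⟨X', f', g', hT'⟩ := distinguished_cocone_triangle₂ (rW.r ≫ k ≫ rY.i⟦(1 : ℤ)⟧')
  obtain ⟨p, hp₁, hp₂⟩ := exists_middle_hom hT hT' rY.i rW.i (by simp)
  obtain ⟨q, hq₁, hq₂⟩ := exists_middle_hom hT' hT rY.r rW.r (by simp [← Functor.map_comp])
  have : IsIso (p ≫ q) := isIso_middle_of_comp_eq hT
    (by rw [reassoc_of% hp₁, hq₁, rY.retract_assoc])
    (by rw [Category.assoc, ← hq₂, ← reassoc_of% hp₂, rW.retract, Category.comp_id])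
  exact ⟨X', ⟨⟨p, q ≫ inv (p ≫ q), by rw [← Category.assoc, IsIso.hom_inv_id]⟩⟩, f', g', _, hT'⟩

end Extensions

section Reassociation

open Module

variable {K : Type*} [Field K] {C : Type u} [Category.{v} C] [Preadditive C] [HasZeroObject C]
  [HasShift C ℤ] [∀ n : ℤ, (shiftFunctor C n).Additive] [Pretriangulated C] [Linear K C]

theorem postcompRank_add_postcompRank [∀ X Y : C, FiniteDimensional K (X ⟶ Y)] (P : C)
    {A E B X W : C} {a : A ⟶ E} {e : E ⟶ B} {i : A ⟶ X} {x : X ⟶ W} {h : W ⟶ A⟦(1 : ℤ)⟧}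
    {k : B ⟶ A⟦(1 : ℤ)⟧} {b : B ⟶ W} {φ : E ⟶ X}
    (hE : Triangle.mk a e k ∈ distTriang C) (hX : Triangle.mk i x h ∈ distTriang C)
    (hφa : a ≫ φ = i) (hφx : e ≫ b = φ ≫ x) (hk : b ≫ h = k) :
    postcompRank K P φ + postcompRank K P k = postcompRank K P i + postcompRank K P b := by
  have hker_x : (Linear.rightComp K P x).ker = (Linear.rightComp K P i).range :=
    ker_rightComp_mor₂ P hX
  have hker_h : (Linear.rightComp K P h).ker = (Linear.rightComp K P x).range :=
    ker_rightComp_mor₂ P (rot_of_distTriang _ hX)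
  have hker_k : (Linear.rightComp K P k).ker = (Linear.rightComp K P e).range :=
    ker_rightComp_mor₂ P (rot_of_distTriang _ hE)
  have hi : (Linear.rightComp K P i).range =
      (Linear.rightComp K P φ).range ⊓ (Linear.rightComp K P x).ker := by
    rw [hker_x, eq_comm, inf_eq_right]
    rintro _ ⟨p, rfl⟩
    exact ⟨p ≫ a, by simp [hφa]⟩
  have heb : (Linear.rightComp K P (e ≫ b)).range =
      (Linear.rightComp K P b).range ⊓ (Linear.rightComp K P h).ker := by
    refine le_antisymm (le_inf ?_ ?_) ?_
    · rintro _ ⟨p, rfl⟩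
      exact ⟨p ≫ e, by simp⟩
    · rw [hker_h]
      rintro _ ⟨p, rfl⟩
      exact ⟨p ≫ φ, by simp [hφx]⟩
    · rintro _ ⟨⟨p, rfl⟩, hp⟩
      obtain ⟨q, rfl⟩ : p ∈ (Linear.rightComp K P e).range := by
        rw [← hker_k, ← hk]
        simpa using hp
      exact ⟨q, by simp⟩
  have h₁ := postcompRank_comp_add hi
  have h₂ := postcompRank_comp_add heb
  rw [hk] at h₂
  rw [← hφx] at h₁
  omega

theorem finrank_hom_cone_eq [∀ X Y : C, FiniteDimensional K (X ⟶ Y)] (P : C)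
    {A E B X W D Z : C} {a : A ⟶ E} {e : E ⟶ B} {i : A ⟶ X} {x : X ⟶ W} {h : W ⟶ A⟦(1 : ℤ)⟧}
    {b : B ⟶ W} {d : W ⟶ D} {k : D ⟶ B⟦(1 : ℤ)⟧} {φ : E ⟶ X} {ψ : X ⟶ Z} {χ : Z ⟶ E⟦(1 : ℤ)⟧}
    (hE : Triangle.mk a e (b ≫ h) ∈ distTriang C) (hX : Triangle.mk i x h ∈ distTriang C)
    (hW : Triangle.mk b d k ∈ distTriang C) (hZ : Triangle.mk φ ψ χ ∈ distTriang C)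
    (hφa : a ≫ φ = i) (hφx : e ≫ b = φ ≫ x) :
    finrank K (P ⟶ Z) = finrank K (P ⟶ D) := by
  have hrank := postcompRank_add_postcompRank (K := K) P hE hX hφa hφx rfl
  have hrank₁ := postcompRank_add_postcompRank (K := K) P (distinguished_neg_shift hE)
    (distinguished_neg_shift hX) (φ := φ⟦(1 : ℤ)⟧') (b := b⟦(1 : ℤ)⟧')
    (by rw [← hφa, Functor.map_comp, Preadditive.neg_comp])
    (by rw [Preadditive.neg_comp, Preadditive.comp_neg, ← Functor.map_comp, hφx, Functor.map_comp])
    (by rw [Functor.map_comp, Preadditive.comp_neg])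
  have hE₂ : Triangle.mk (b ≫ h) (-a⟦(1 : ℤ)⟧') (-e⟦(1 : ℤ)⟧') ∈ distTriang C :=
    rot_of_distTriang _ (rot_of_distTriang _ hE)
  have hdimE := finrank_hom_cone_right (K := K) P hE₂
  have hdimX := finrank_hom_cone_right (K := K) P hX
  have hdimW := finrank_hom_cone_right (K := K) P hW
  have hdimZ := finrank_hom_cone_right (K := K) P hZ
  simp only [postcompRank_neg] at hrank₁
  omega

theorem IsExtension.assoc (hft : IsFiniteTypeOver K C) {A X W B D : C}
    (hX : IsExtension A X W) (hW : IsExtension B W D) :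
    ∃ E : C, IsExtension A E B ∧ IsExtension E X D := by
  obtain ⟨i, x, h, hX⟩ := hX
  obtain ⟨b, d, k, hW⟩ := hW
  obtain ⟨E, a, e, hE⟩ := distinguished_cocone_triangle₂ (b ≫ h)
  obtain ⟨φ, hφa, hφx⟩ := exists_middle_hom hE hX (𝟙 A) b (by simp)
  obtain ⟨Z, ψ, χ, hZ⟩ := distinguished_cocone_triangle φ
  have := hft.finiteDimensional_hom
  obtain ⟨α⟩ := nonempty_iso_of_finrank_eq hft fun P =>
    finrank_hom_cone_eq P hE hX hW hZ (hφa.trans (Category.id_comp i)) hφx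
  have hEXZ : IsExtension E X Z := ⟨φ, ψ, χ, hZ⟩
  exact ⟨E, ⟨a, e, _, hE⟩, hEXZ.of_iso (Iso.refl E) (Iso.refl X) α.symm⟩

end Reassociation

/-! ### Towers -/

section Towers

variable {C : Type u} [Category.{v} C] [Preadditive C] [HasZeroObject C]
  [HasShift C ℤ] [∀ n : ℤ, (shiftFunctor C n).Additive] [Pretriangulated C]

/-- `IsBuilt M s X` says that `X` is the end of a tower over `M`: it arises from a zero object by
successive extensions by the shifts `M⟦n⟧`, where `n` runs through the multiset `s`. -/
inductive IsBuilt (M : C) : Multiset ℤ → C → Prop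
  | zero {X : C} (hX : IsZero X) : IsBuilt M 0 X
  | cons {n : ℤ} {s : Multiset ℤ} {Y X : C} (hY : IsBuilt M s Y) (hX : IsExtension Y X (M⟦n⟧)) :
    IsBuilt M (n ::ₘ s) X

namespace IsBuilt

variable {M : C}

theorem of_iso {s : Multiset ℤ} {X X' : C} (h : IsBuilt M s X) (β : X' ≅ X) : IsBuilt M s X' := by
  cases h with
  | zero hX => exact zero (IsZero.of_iso hX β)
  | cons hY hX => exact cons hY (hX.of_iso (Iso.refl _) β (Iso.refl _))

theorem shift {s : Multiset ℤ} {X : C} (h : IsBuilt M s X) (n : ℤ) :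
    IsBuilt M (s.map (· + n)) (X⟦n⟧) := by
  induction h with
  | zero hX => exact zero ((shiftFunctor C n).map_isZero hX)
  | @cons m s Y X _ hX ih =>
    rw [Multiset.map_cons]
    exact cons ih ((hX.shift n).of_iso (Iso.refl _) (Iso.refl _)
      ((shiftFunctorAdd' C m n (m + n) rfl).app M))

theorem eq_zero {N : C} {s : Multiset ℤ} {X : C} (hX : IsBuilt M s X)
    (hs : ∀ n ∈ s, Subsingleton (M⟦n⟧ ⟶ N)) (φ : X ⟶ N) : φ = 0 := by
  induction hX with
  | zero hX => exact hX.eq_zero_of_src φ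
  | cons _ hX ih =>
    obtain ⟨f, g, h, hT⟩ := hX
    rw [Multiset.forall_mem_cons] at hs
    obtain ⟨ψ, hψ⟩ := Triangle.yoneda_exact₂ _ hT φ (ih hs.2 (f ≫ φ))
    have hψ₀ : ψ = 0 := hs.1.elim ψ 0
    rw [hψ, hψ₀]
    exact comp_zero

theorem mem_of_isThick {S : Set C} (hS : IsThick C S) (hM : M ∈ S) {s : Multiset ℤ} {X : C}
    (hX : IsBuilt M s X) : X ∈ S := by
  induction hX with
  | zero hX =>
    exact hS.mem_of_iso ((isZero_zero C).iso hX)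
      (hS.cone_mem _ (contractible_distinguished M) hM hM)
  | cons _ hX ih =>
    obtain ⟨f, g, h, hT⟩ := hX
    exact hS.cone_mem _ (inv_rot_of_distTriang _ hT)
      (hS.shift_mem _ _ (hS.shift_mem _ _ hM)) ih

theorem add {K : Type*} [Field K] [Linear K C] (hft : IsFiniteTypeOver K C) {s s' : Multiset ℤ}
    {A X W : C} (hA : IsBuilt M s A) (hX : IsExtension A X W) (hW : IsBuilt M s' W) :
    IsBuilt M (s' + s) X := by
  induction hW generalizing X with
  | zero hW =>
    obtain ⟨f, g, k, hT⟩ := hX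
    have : IsIso f := (Triangle.isZero₃_iff_isIso₁ _ hT).1 hW
    rw [zero_add]
    exact hA.of_iso (asIso f).symm
  | cons _ hW ih =>
    obtain ⟨E, hE, hEX⟩ := hX.assoc hft hW
    rw [Multiset.cons_add]
    exact cons (ih hE) hEX

theorem exists_retract_bind {K : Type*} [Field K] [Linear K C] (hft : IsFiniteTypeOver K C)
    {M' B : C} {s s' : Multiset ℤ} {X : C} (hX : IsBuilt M s X) (r : Retract M B)
    (hB : IsBuilt M' s' B) :
    ∃ X' : C, Nonempty (Retract X X') ∧ IsBuilt M' (s.bind fun n => s'.map (· + n)) X' := by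
  induction hX with
  | @zero X hX => exact ⟨X, ⟨Retract.refl X⟩, zero hX⟩
  | @cons n s Y X _ hX ih =>
    obtain ⟨Y', ⟨rY⟩, hY'⟩ := ih
    obtain ⟨X', rX, hX'⟩ := hX.exists_retract rY (r.map (shiftFunctor C n))
    rw [Multiset.cons_bind]
    exact ⟨X', rX, hY'.add hft hX' (hB.shift n)⟩

end IsBuilt

theorem isBuilt_of_tower {M : C} {p : ℕ} (n : Fin p → ℤ) (A : Fin (p + 1) → C) (h₀ : IsZero (A 0))
    (hA : ∀ i : Fin p, IsExtension (A i.castSucc) (A i.succ) (M⟦n i⟧)) :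
    IsBuilt M (Finset.univ.val.map n) (A (Fin.last p)) := by
  induction p with
  | zero => exact .zero h₀
  | succ p ih =>
    have hn : Finset.univ.val.map n =
        n (Fin.last p) ::ₘ Finset.univ.val.map fun i : Fin p => n i.castSucc := by
      simp [Fin.univ_castSuccEmb, Function.comp_def]
    rw [hn]
    exact .cons (ih (fun i => n i.castSucc) (fun i => A i.castSucc) h₀ fun i => hA i.castSucc)
      (hA (Fin.last p))

theorem IsBuilt.exists_tower {M : C} {s : Multiset ℤ} {X : C} (hX : IsBuilt M s X) :
    ∃ (p : ℕ) (n : Fin p → ℤ) (A : Fin (p + 1) → C), IsZero (A 0) ∧ A (Fin.last p) = X ∧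
      (∀ i : Fin p, IsExtension (A i.castSucc) (A i.succ) (M⟦n i⟧)) ∧
      s = Finset.univ.val.map n := by
  induction hX with
  | @zero X hX => exact ⟨0, Fin.elim0, fun _ => X, hX, rfl, fun i => i.elim0, rfl⟩
  | @cons m s Y X _ hX ih =>
    obtain ⟨p, n, A, h₀, rfl, hA, rfl⟩ := ih
    refine ⟨p + 1, Fin.snoc (α := fun _ => ℤ) n m, Fin.snoc (α := fun _ => C) A X, ?_, ?_, ?_, ?_⟩
    · rwa [← Fin.castSucc_zero, Fin.snoc_castSucc]
    · rw [Fin.snoc_last]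
    · intro i
      cases i using Fin.lastCases with
      | last => simpa only [Fin.succ_last, Fin.snoc_last, Fin.snoc_castSucc] using hX
      | cast i => simpa only [Fin.succ_castSucc, Fin.snoc_castSucc] using hA i
    · rw [Fin.univ_castSuccEmb]
      simp

end Towers

/-! ### Costs and complexity -/

section Complexity

/-- The cost `exp (n t)` of one step `M⟦n⟧` in a tower over `M`. -/
noncomputable def weight (t : ℝ) (n : ℤ) : ℝ≥0∞ :=
  ENNReal.ofReal (Real.exp (n * t))

theorem weight_pos (t : ℝ) (n : ℤ) : 0 < weight t n :=
  ENNReal.ofReal_pos.2 (Real.exp_pos _)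

theorem weight_add (t : ℝ) (m n : ℤ) : weight t (m + n) = weight t m * weight t n := by
  rw [weight, weight, weight, ← ENNReal.ofReal_mul (Real.exp_pos _).le, ← Real.exp_add,
    Int.cast_add, add_mul]

theorem sum_weight_bind (t : ℝ) (s s' : Multiset ℤ) :
    ((s.bind fun n => s'.map (· + n)).map (weight t)).sum =
      (s'.map (weight t)).sum * (s.map (weight t)).sum := by
  simp only [Multiset.map_bind, Multiset.sum_bind, Multiset.map_map, Function.comp_apply,
    weight_add, Multiset.sum_map_mul_right, Multiset.sum_map_mul_left]

theorem le_sInf_mul_sInf {a : ℝ≥0∞} {S T : Set ℝ≥0∞} (hS : sInf S ≠ 0) (hT : sInf T ≠ 0)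
    (h : ∀ x ∈ S, ∀ y ∈ T, a ≤ x * y) : a ≤ sInf S * sInf T := by
  by_cases hS' : sInf S = ⊤
  · simp [hS', hT]
  by_cases hT' : sInf T = ⊤
  · simp [hT', hS]
  rw [sInf_eq_top] at hS' hT'
  push Not at hS' hT'
  obtain ⟨x, hx, hx'⟩ := hS'
  obtain ⟨y, hy, hy'⟩ := hT'
  rw [sInf_eq_iInf', sInf_eq_iInf']
  exact ENNReal.le_iInf_mul_iInf ⟨⟨x, hx⟩, hx'⟩ ⟨⟨y, hy⟩, hy'⟩ fun i j => h i i.2 j j.2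

variable {C : Type u} [Category.{v} C] [Preadditive C] [HasZeroObject C]
  [HasShift C ℤ] [∀ n : ℤ, (shiftFunctor C n).Additive] [Pretriangulated C]

/-- The costs of the towers over `M` whose last object has `N` as a retract; in a triangulated
category retracts and direct summands are the same. -/
def costs (t : ℝ) (M N : C) : Set ℝ≥0∞ :=
  {c | ∃ (s : Multiset ℤ) (X : C), IsBuilt M s X ∧ Nonempty (Retract N X) ∧
    c = (s.map (weight t)).sum}

theorem exists_iso_biprod_of_retract {N X : C} (r : Retract N X) :
    ∃ N' : C, Nonempty (X ≅ N ⊞ N') := by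
  obtain ⟨N', g, h, hT⟩ := distinguished_cocone_triangle r.i
  have h₀ : h = 0 := Triangle.mor₃_eq_zero_of_mono₁ _ hT (inferInstanceAs (Mono r.i))
  obtain ⟨e, -, -⟩ := exists_iso_binaryBiproduct_of_distTriang _ hT h₀
  exact ⟨N', ⟨e⟩⟩

theorem mem_thickClosure_of_mem_costs {t : ℝ} {M N : C} {c : ℝ≥0∞} (hc : c ∈ costs t M N) :
    N ∈ thickClosure C M := by
  obtain ⟨s, X, hX, ⟨r⟩, -⟩ := hc
  obtain ⟨N', ⟨e⟩⟩ := exists_iso_biprod_of_retract r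
  exact fun S ⟨hS, hM⟩ => hS.summand_mem N N' (hS.mem_of_iso e (hX.mem_of_isThick hS hM))

theorem complexity_eq_sInf_costs (t : ℝ) {M N : C} (hN : ¬ IsZero N) :
    complexity C t M N = sInf (costs t M N) := by
  by_cases hM : N ∈ thickClosure C M
  · rw [complexity, if_neg hN, if_pos hM]
    congr 1
    ext c
    constructor
    · rintro ⟨p, -, n, A, N', h₀, ⟨e⟩, hA, rfl⟩
      exact ⟨_, _, isBuilt_of_tower n A h₀ hA, ⟨⟨biprod.inl ≫ e.inv, e.hom ≫ biprod.fst, by simp⟩⟩,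
        by rw [Multiset.map_map]; rfl⟩
    · rintro ⟨s, X, hX, ⟨r⟩, rfl⟩
      obtain ⟨p, n, A, h₀, rfl, hA, rfl⟩ := hX.exists_tower
      obtain ⟨N', e⟩ := exists_iso_biprod_of_retract r
      refine ⟨p, Nat.pos_of_ne_zero ?_, n, A, N', h₀, e, hA, by rw [Multiset.map_map]; rfl⟩
      rintro rfl
      exact hN (IsZero.of_mono r.i h₀)
  · have hcosts : costs t M N = ∅ :=
      Set.eq_empty_of_forall_notMem fun c hc => hM (mem_thickClosure_of_mem_costs hc)
    rw [complexity, if_neg hN, if_neg hM, hcosts, sInf_empty]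

variable {K : Type*} [Field K] [Linear K C]

theorem sInf_costs_ne_zero (hft : IsFiniteTypeOver K C) (t : ℝ) {M N : C} (hN : ¬ IsZero N) :
    sInf (costs t M N) ≠ 0 := by
  let F : Finset ℤ := (hft.finite_setOf_not_subsingleton M N).toFinset
  have hpos : 0 < F.inf (weight t) :=
    (Finset.lt_inf_iff ENNReal.zero_lt_top).2 fun n _ => weight_pos t n
  refine (hpos.trans_le (le_sInf ?_)).ne'
  rintro _ ⟨s, X, hX, ⟨r⟩, rfl⟩
  obtain ⟨n, hns, hn⟩ : ∃ n ∈ s, ¬ Subsingleton (M⟦n⟧ ⟶ N) := by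
    by_contra! hs
    refine hN ((IsZero.iff_id_eq_zero N).2 ?_)
    rw [← r.retract, hX.eq_zero hs r.r, comp_zero]
  calc F.inf (weight t) ≤ weight t n := Finset.inf_le (by simpa [F] using hn)
    _ ≤ (s.map (weight t)).sum :=
      Multiset.single_le_sum (fun _ _ => zero_le) _ (Multiset.mem_map_of_mem _ hns)

theorem mul_mem_costs (hft : IsFiniteTypeOver K C) {t : ℝ} {M₁ M₂ M₃ : C} {c₁ c₂ : ℝ≥0∞}
    (h₁ : c₁ ∈ costs t M₁ M₂) (h₂ : c₂ ∈ costs t M₂ M₃) : c₁ * c₂ ∈ costs t M₁ M₃ := by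
  obtain ⟨s₁, X₁, hX₁, ⟨r₁⟩, rfl⟩ := h₁
  obtain ⟨s₂, X₂, hX₂, ⟨r₂⟩, rfl⟩ := h₂
  obtain ⟨X, ⟨r⟩, hX⟩ := hX₂.exists_retract_bind hft r₁ hX₁
  exact ⟨_, X, hX, ⟨r₂.trans r⟩, (sum_weight_bind t s₂ s₁).symm⟩

theorem statement_3_general (hft : IsFiniteTypeOver K C) (M₁ M₂ M₃ : C) (h : ¬ IsZero M₂) (t : ℝ) :
    complexity C t M₁ M₃ ≤ complexity C t M₁ M₂ * complexity C t M₂ M₃ := by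
  by_cases h₃ : IsZero M₃
  · rw [complexity, if_pos h₃]
    exact zero_le
  rw [complexity_eq_sInf_costs t h, complexity_eq_sInf_costs t h₃, complexity_eq_sInf_costs t h₃]
  exact le_sInf_mul_sInf (sInf_costs_ne_zero hft t h) (sInf_costs_ne_zero hft t h₃)
    fun c₁ hc₁ c₂ hc₂ => sInf_le (mul_mem_costs hft hc₁ hc₂)

end Complexity

/-- Subadditivity of complexity: if `M₂ ≇ 0` then
`δ_(T,t)(M₁, M₃) ≤ δ_(T,t)(M₁, M₂) · δ_(T,t)(M₂, M₃)`. -/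
theorem statement_3 {C : Type u} [Category.{v} C] [Preadditive C] [HasZeroObject C]
    [HasShift C ℤ] [∀ n : ℤ, (shiftFunctor C n).Additive] [Pretriangulated C] [Linear ℂ C]
    (hC : ∃ X : C, ¬ IsZero X) (hft : IsFiniteType C)
    (M₁ M₂ M₃ : C) (h : ¬ IsZero M₂) (t : ℝ) :
    complexity C t M₁ M₃ ≤ complexity C t M₁ M₂ * complexity C t M₂ M₃ :=
  statement_3_general hft M₁ M₂ M₃ h t

end CatEntropy
end

section
/- Let D^b(ℂ) be the bounded derived category of finite-dimensional ℂ-vector spaces. For every object M of D^b(ℂ) and every t ∈ ℝ, one has δ_{D^b(ℂ),t}(ℂ, M) = Σ_{l∈ℤ} (dim_ℂ H^l(M)) · e^{−lt}, where ℂ is regarded as the complex concentrated in degree 0 and H^l denotes l-th cohomology. -/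
open CategoryTheory Limits Pretriangulated Filter
open scoped ENNReal

universe u v u₂ v₂

namespace CatEntropy

section DbC

/-- Since every complex of vector spaces splits, the bounded derived category `D^b(ℂ)` of
finite-dimensional ℂ-vector spaces is (triangle-equivalently) the full subcategory of the
homotopy category of complexes of ℂ-vector spaces consisting of the objects with
finite-dimensional cohomology concentrated in finitely many degrees; complexities of such
objects may be computed in the ambient homotopy category. -/
noncomputable instance : Limits.HasZeroObject (ModuleCat.{0} ℂ) := by infer_instance

/-- The homotopy category of complexes of ℂ-vector spaces, in which `D^b(ℂ)` sits as the
full subcategory of objects with bounded finite-dimensional cohomology. -/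
abbrev KVect := HomotopyCategory (ModuleCat.{0} ℂ) (ComplexShape.up ℤ)

/-- `ℂ`, seen as the complex concentrated in degree `0`. -/
noncomputable def CC : KVect :=
  (HomotopyCategory.quotient (ModuleCat.{0} ℂ) (ComplexShape.up ℤ)).obj
    ((HomologicalComplex.single (ModuleCat.{0} ℂ) (ComplexShape.up ℤ) 0).obj
      (ModuleCat.of ℂ ℂ))

/-- The `l`-th cohomology functor. -/
noncomputable def Hl (l : ℤ) : KVect ⥤ ModuleCat.{0} ℂ :=
  HomotopyCategory.homologyFunctor (ModuleCat.{0} ℂ) (ComplexShape.up ℤ) l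

/-!
Over a division ring, a tower of triangles that starts at zero and attaches one copy of `k⟦n⟧` for
each `n` in a multiset `s` yields an object `X` with `dim H^l(X) ≤ s.count (-l)`, by the long exact
cohomology sequence. Passing to a direct summand only lowers dimensions, so whenever `X` is a direct
summand of the top of such a tower, `s` contains each `n` at least `dim H^{-n}(X)` times, and the
cost of the tower is at least the asserted sum.

Conversely, a nonzero class in `H^{-n}(X)` is detected by a linear functional, which lifts to a
morphism `X ⟶ k⟦n⟧` that is surjective on cohomology. Its fibre has the cohomology of `X` with one
dimension removed in degree `-n`, so induction on the total dimension builds `X` with equality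
everywhere. The induction starts because an acyclic complex of vector spaces is contractible.
-/

section Filtrations

variable {C : Type u} [Category.{v} C] [Preadditive C] [HasZeroObject C]
  [HasShift C ℤ] [∀ n : ℤ, (shiftFunctor C n).Additive] [Pretriangulated C]

/-- `IsBuiltFrom G s X` says that `X` is the top of a tower of distinguished triangles as in the
definition of `complexity`, starting from zero and attaching one copy of `G⟦n⟧` for each `n` in the
multiset `s`. The order of attachment is forgotten, as neither the cost of the tower nor the
dimensions of the cohomology depend on it. -/
inductive IsBuiltFrom (G : C) : Multiset ℤ → C → Prop
  | zero {X : C} (hX : IsZero X) : IsBuiltFrom G 0 X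
  | cons {s : Multiset ℤ} {n : ℤ} {A B : C} (f : A ⟶ B) (g : B ⟶ G⟦n⟧) (h : G⟦n⟧ ⟶ A⟦(1 : ℤ)⟧)
      (hT : Triangle.mk f g h ∈ distTriang C) (hA : IsBuiltFrom G s A) : IsBuiltFrom G (n ::ₘ s) B

/-- The cost `∑ exp (n t)`, over `n` in `s`, of a tower with attached copies `G⟦n⟧`. -/
noncomputable def cost (t : ℝ) (s : Multiset ℤ) : ℝ≥0∞ :=
  (s.map fun n : ℤ => ENNReal.ofReal (Real.exp ((n : ℝ) * t))).sum

theorem cost_mono (t : ℝ) : Monotone (cost t) := fun s s' h => by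
  obtain ⟨r, rfl⟩ := Multiset.le_iff_exists_add.1 h
  rw [cost, cost, Multiset.map_add, Multiset.sum_add]
  exact le_self_add

theorem cost_eq_tsum_count (t : ℝ) (s : Multiset ℤ) :
    cost t s = ∑' n : ℤ, ENNReal.ofReal ((s.count n : ℝ) * Real.exp ((n : ℝ) * t)) := by
  rw [cost, Finset.sum_multiset_map_count, tsum_eq_sum (s := s.toFinset) fun n hn => ?_]
  · exact Finset.sum_congr rfl fun n _ => by
      rw [ENNReal.ofReal_mul (Nat.cast_nonneg _), ENNReal.ofReal_natCast, nsmul_eq_mul]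
  · rw [Multiset.count_eq_zero.2 (mt Multiset.mem_toFinset.2 hn), Nat.cast_zero, zero_mul,
      ENNReal.ofReal_zero]

theorem univ_val_map_eq_last_cons {α : Type*} {p : ℕ} (n : Fin (p + 1) → α) :
    Finset.univ.val.map n =
      n (Fin.last p) ::ₘ Finset.univ.val.map fun i : Fin p => n i.castSucc := by
  rw [Fin.univ_castSuccEmb, Finset.cons_val, Multiset.map_cons, Finset.map_val, Multiset.map_map]
  rfl

namespace IsBuiltFrom

variable {G X : C} {s : Multiset ℤ}

theorem of_tower {p : ℕ} {n : Fin p → ℤ} {A : Fin (p + 1) → C} (h₀ : IsZero (A 0))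
    (hA : ∀ i : Fin p, ∃ (f : A i.castSucc ⟶ A i.succ) (g : A i.succ ⟶ G⟦n i⟧)
      (h : G⟦n i⟧ ⟶ (A i.castSucc)⟦(1 : ℤ)⟧), Triangle.mk f g h ∈ distTriang C) :
    IsBuiltFrom G (Finset.univ.val.map n) (A (Fin.last p)) := by
  induction p with
  | zero => exact zero h₀
  | succ p ih =>
    obtain ⟨f, g, h, hT⟩ := hA (Fin.last p)
    rw [univ_val_map_eq_last_cons]
    exact cons f g h hT (ih (A := fun i => A i.castSucc) h₀ fun i => hA i.castSucc)

theorem exists_tower (hX : IsBuiltFrom G s X) :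
    ∃ (p : ℕ) (n : Fin p → ℤ) (A : Fin (p + 1) → C),
      IsZero (A 0) ∧ A (Fin.last p) = X ∧
      (∀ i : Fin p, ∃ (f : A i.castSucc ⟶ A i.succ) (g : A i.succ ⟶ G⟦n i⟧)
        (h : G⟦n i⟧ ⟶ (A i.castSucc)⟦(1 : ℤ)⟧), Triangle.mk f g h ∈ distTriang C) ∧
      Finset.univ.val.map n = s := by
  induction hX with
  | @zero X hX => exact ⟨0, Fin.elim0, fun _ => X, hX, rfl, fun i => i.elim0, rfl⟩
  | @cons s m A B f g h hT hA ih =>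
    obtain ⟨p, n, A', h₀, rfl, hA', rfl⟩ := ih
    refine ⟨p + 1, Fin.snoc (α := fun _ => ℤ) n m, Fin.snoc (α := fun _ => C) A' B,
      ?_, Fin.snoc_last _ _, fun i => ?_, ?_⟩
    · rwa [← Fin.castSucc_zero, Fin.snoc_castSucc]
    · refine Fin.lastCases ?_ (fun i => ?_) i
      · rw [Fin.snoc_castSucc, Fin.succ_last, Fin.snoc_last, Fin.snoc_last]
        exact ⟨f, g, h, hT⟩
      · rw [Fin.snoc_castSucc, Fin.succ_castSucc, Fin.snoc_castSucc, Fin.snoc_castSucc]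
        exact hA' i
    · simp only [univ_val_map_eq_last_cons, Fin.snoc_last, Fin.snoc_castSucc]

theorem mem_thickClosure (hX : IsBuiltFrom G s X) : X ∈ thickClosure C G := by
  rintro S ⟨hS, hG⟩
  induction hX with
  | zero hX =>
    exact hS.mem_of_iso ((isZero_zero C).iso hX)
      (hS.cone_mem _ (contractible_distinguished G) hG hG)
  | @cons _ n _ _ f g h hT _ hA =>
    exact hS.cone_mem _ (inv_rot_of_distTriang _ hT)
      (hS.shift_mem _ (-1) (hS.shift_mem _ n hG)) hA

theorem complexity_eq_cost {t : ℝ} (hX : IsBuiltFrom G s X)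
    (hmin : ∀ {s' : Multiset ℤ} {Y : C}, IsBuiltFrom G s' Y → Retract X Y →
      cost t s ≤ cost t s') :
    complexity C t G X = cost t s := by
  by_cases hX₀ : IsZero X
  · rw [complexity, if_pos hX₀]
    exact (le_zero_iff.1 (hmin (zero hX₀) (.refl X))).symm
  rw [complexity, if_neg hX₀, if_pos hX.mem_thickClosure]
  refine le_antisymm (sInf_le ?_) (le_sInf ?_)
  · obtain ⟨p, n, A, h₀, rfl, hA, rfl⟩ := hX.exists_tower
    have hp : p ≠ 0 := by
      rintro rfl
      exact hX₀ h₀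
    exact ⟨p, hp.bot_lt, n, A, A 0, h₀, ⟨isoBiprodZero h₀⟩, hA, by
      rw [cost, Multiset.map_map]; rfl⟩
  · rintro c ⟨p, -, n, A, N', h₀, ⟨e⟩, hA, rfl⟩
    have hr : Retract X (A (Fin.last p)) :=
      { i := biprod.inl ≫ e.inv, r := e.hom ≫ biprod.fst }
    exact (hmin (of_tower h₀ hA) hr).trans_eq (by rw [cost, Multiset.map_map]; rfl)

end IsBuiltFrom

end Filtrations

section VectorSpaces

variable {k : Type u} [DivisionRing k]

theorem finite_and_finrank_X₂_le_of_exact {S : ShortComplex (ModuleCat.{v} k)} (hS : S.Exact)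
    (h₁ : Module.Finite k S.X₁) (h₃ : Module.Finite k S.X₃) :
    Module.Finite k S.X₂ ∧
      Module.finrank k S.X₂ ≤ Module.finrank k S.X₁ + Module.finrank k S.X₃ := by
  have hex : Function.Exact S.f.hom S.g.hom.rangeRestrict :=
    LinearMap.exact_iff.2 (by rw [LinearMap.ker_rangeRestrict, hS.moduleCat_range_eq_ker])
  have hfin : Module.Finite k S.X₂ := .of_exact hex S.g.hom.surjective_rangeRestrict
  refine ⟨hfin, ?_⟩
  calc Module.finrank k S.X₂
      = Module.finrank k S.f.hom.range + Module.finrank k S.g.hom.range := by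
        rw [hS.moduleCat_range_eq_ker, add_comm, LinearMap.finrank_range_add_finrank_ker]
    _ ≤ _ := add_le_add S.f.hom.finrank_range_le S.g.hom.range.finrank_le

theorem finite_X₁_and_finrank_X₂_eq_of_shortExact {S : ShortComplex (ModuleCat.{v} k)}
    (hS : S.ShortExact) (h₂ : Module.Finite k S.X₂) :
    Module.Finite k S.X₁ ∧
      Module.finrank k S.X₂ = Module.finrank k S.X₁ + Module.finrank k S.X₃ := by
  have h₁ : Module.Finite k S.X₁ := .of_injective S.f.hom hS.moduleCat_injective_f
  have h₃ : Module.Finite k S.X₃ := .of_surjective S.g.hom hS.moduleCat_surjective_g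
  exact ⟨h₁, ModuleCat.free_shortExact_finrank_add hS rfl rfl⟩

instance injective_moduleCat (V : ModuleCat.{u} k) : Injective V :=
  have := Module.injective_of_isSemisimpleRing k V
  Module.injective_object_of_injective_module k V

theorem finrank_le_of_retract {V W : ModuleCat.{v} k} [Module.Finite k W] (r : Retract V W) :
    Module.finrank k V ≤ Module.finrank k W :=
  LinearMap.finrank_le_finrank_of_injective (f := r.i.hom)
    ((ModuleCat.mono_iff_injective r.i).1 inferInstance)

theorem exists_epi_to_of {V : ModuleCat.{u} k} (hV : ¬ IsZero V) :
    ∃ φ : V ⟶ ModuleCat.of k k, Epi φ := by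
  rw [ModuleCat.isZero_iff_subsingleton, not_subsingleton_iff_nontrivial] at hV
  obtain ⟨v, hv⟩ := exists_ne (0 : V)
  obtain ⟨φ, hφ⟩ := Module.Projective.exists_dual_ne_zero k hv
  have hφ₀ : φ ≠ 0 := fun h => hφ (by rw [h, LinearMap.zero_apply])
  exact ⟨ModuleCat.ofHom φ,
    (ModuleCat.epi_iff_surjective _).2 (LinearMap.surjective_of_ne_zero hφ₀)⟩

end VectorSpaces

section Triangles

variable {C : Type u} [Category.{v} C] [Preadditive C] [HasZeroObject C]
  [HasShift C ℤ] [∀ n : ℤ, (shiftFunctor C n).Additive] [Pretriangulated C]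

theorem shortExact_map_shift_of_epi {𝒜 : Type u₂} [Category.{v₂} 𝒜] [Abelian 𝒜]
    (F : C ⥤ 𝒜) [F.ShiftSequence ℤ] [F.IsHomological] (T : Triangle C) (hT : T ∈ distTriang C)
    (n₀ n₁ : ℤ) (hn : n₀ + 1 = n₁) (h₀ : Epi ((F.shift n₀).map T.mor₂))
    (h₁ : Epi ((F.shift n₁).map T.mor₂)) :
    (ShortComplex.mk _ _ (F.homologySequence_comp T hT n₁)).ShortExact where
  exact := F.homologySequence_exact₂ T hT n₁
  mono_f := (F.homologySequence_mono_shift_map_mor₁_iff T hT n₀ n₁ hn).2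
    ((F.homologySequence_epi_shift_map_mor₂_iff T hT n₀ n₁ hn).1 h₀)
  epi_g := h₁

theorem IsBuiltFrom.finite_and_finrank_le {k : Type u₂} [DivisionRing k] {G X : C}
    {s : Multiset ℤ} (hX : IsBuiltFrom G s X) (F : C ⥤ ModuleCat.{v₂} k) [F.IsHomological]
    (hG : ∀ n : ℤ, Module.Finite k (F.obj (G⟦n⟧))) :
    Module.Finite k (F.obj X) ∧
      Module.finrank k (F.obj X) ≤ (s.map fun n : ℤ => Module.finrank k (F.obj (G⟦n⟧))).sum := by
  induction hX with
  | zero hX =>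
    have := ModuleCat.subsingleton_of_isZero (F.map_isZero hX)
    exact ⟨inferInstance, Module.finrank_zero_of_subsingleton.le⟩
  | @cons s n A B f g h hT _ ih =>
    obtain ⟨hA, hAs⟩ := ih
    obtain ⟨hB, hBs⟩ :=
      finite_and_finrank_X₂_le_of_exact (F.map_distinguished_exact _ hT) hA (hG n)
    refine ⟨hB, hBs.trans ?_⟩
    rw [Multiset.map_cons, Multiset.sum_cons, add_comm]
    exact Nat.add_le_add_left hAs _

end Triangles

section Complexes

open HomotopyCategory (homologyFunctor homologyFunctorFactors quotient singleFunctor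
  singleFunctors)

variable {𝒜 : Type u} [Category.{v} 𝒜] [Abelian 𝒜]

theorem exists_comp_comp_eq_self [∀ X : 𝒜, Projective X] [∀ X : 𝒜, Injective X] {X Y : 𝒜}
    (f : X ⟶ Y) : ∃ t : Y ⟶ X, f ≫ t ≫ f = f := by
  refine ⟨Injective.factorThru (𝟙 _) (image.ι f) ≫
    Projective.factorThru (𝟙 _) (factorThruImage f), ?_⟩
  calc f ≫ (Injective.factorThru (𝟙 _) (image.ι f) ≫
        Projective.factorThru (𝟙 _) (factorThruImage f)) ≫ f
      = factorThruImage f ≫ (image.ι f ≫ Injective.factorThru (𝟙 _) (image.ι f)) ≫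
        (Projective.factorThru (𝟙 _) (factorThruImage f) ≫ factorThruImage f) ≫ image.ι f := by
        simp only [Category.assoc, image.fac, image.fac_assoc]
    _ = f := by
        rw [Injective.comp_factorThru, Projective.factorThru_comp, Category.id_comp,
          Category.id_comp, image.fac]

theorem nonempty_homotopy_id_zero_of_exactAt [∀ X : 𝒜, Projective X] [∀ X : 𝒜, Injective X]
    (X : CochainComplex 𝒜 ℤ) (hX : ∀ n, X.ExactAt n) : Nonempty (Homotopy (𝟙 X) 0) := by
  choose t ht using fun i j : ℤ => exists_comp_comp_eq_self (X.d i j)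
  have comp_t_d_of_cycle (i j l : ℤ) (hij : i + 1 = j) (hjl : j + 1 = l) {A : 𝒜} (z : A ⟶ X.X j)
      (hz : z ≫ X.d j l = 0) : z ≫ t i j ≫ X.d i j = z := by
    have hexact := (X.exactAt_iff' i j l (by simp [← hij]) (by simp [hjl])).1 (hX j)
    obtain ⟨w, rfl⟩ : ∃ w, w ≫ X.d i j = z := ⟨_, hexact.liftFromProjective_comp z hz⟩
    rw [Category.assoc, ht]
  -- `t ≫ d` fixes cycles and `𝟙 - d ≫ t` takes values in cycles, so that
  -- `(𝟙 - d ≫ t) ≫ t ≫ d = 𝟙 - d ≫ t`; this is `h ≫ d = 𝟙 - d ≫ h` for `h := t - t ≫ t ≫ d`.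
  let h (j i : ℤ) (_ : (ComplexShape.up ℤ).Rel i j) : X.X j ⟶ X.X i :=
    t i j - t i j ≫ t (i - 1) i ≫ X.d (i - 1) i
  suffices hid : Homotopy.nullHomotopicMap' h = 𝟙 X from hid ▸ ⟨Homotopy.nullHomotopy' h⟩
  ext j
  rw [Homotopy.nullHomotopicMap'_f (k₂ := j - 1) (k₀ := j + 1) (by simp) (by simp),
    HomologicalComplex.id_f]
  have hproj := comp_t_d_of_cycle (j - 1) j (j + 1) (by lia) rfl
    (𝟙 _ - X.d j (j + 1) ≫ t j (j + 1)) (by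
      rw [Preadditive.sub_comp, Category.id_comp, Category.assoc, ht, sub_self])
  simp only [Preadditive.sub_comp, Category.id_comp, Category.assoc] at hproj
  simp only [h, Preadditive.comp_sub, Preadditive.sub_comp, Category.assoc,
    HomologicalComplex.d_comp_d, comp_zero, sub_zero]
  rw [sub_add_eq_add_sub, add_sub_assoc, hproj, add_sub_cancel]

/-- The cohomology of the class of a complex in the homotopy category is that of the complex. -/
noncomputable def homologyQuotientIso (K : CochainComplex 𝒜 ℤ) (l : ℤ) :
    (homologyFunctor 𝒜 (.up ℤ) l).obj ((quotient 𝒜 (.up ℤ)).obj K) ≅ K.homology l :=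
  (homologyFunctorFactors 𝒜 (.up ℤ) l).app K

theorem homologyQuotientIso_hom_naturality {K L : CochainComplex 𝒜 ℤ} (ψ : K ⟶ L) (l : ℤ) :
    (homologyFunctor 𝒜 (.up ℤ) l).map ((quotient 𝒜 (.up ℤ)).map ψ) ≫
        (homologyQuotientIso L l).hom =
      (homologyQuotientIso K l).hom ≫ HomologicalComplex.homologyMap ψ l :=
  (homologyFunctorFactors 𝒜 (.up ℤ) l).hom.naturality ψ

theorem isZero_of_isZero_homologyFunctor_obj [∀ X : 𝒜, Projective X] [∀ X : 𝒜, Injective X]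
    (X : HomotopyCategory 𝒜 (.up ℤ)) (hX : ∀ n, IsZero ((homologyFunctor 𝒜 _ n).obj X)) :
    IsZero X := by
  obtain ⟨X, rfl⟩ := HomotopyCategory.quotient_obj_surjective X
  refine (HomotopyCategory.isZero_quotient_obj_iff X).2
    (nonempty_homotopy_id_zero_of_exactAt X fun n => ?_)
  rw [HomologicalComplex.exactAt_iff_isZero_homology]
  exact (hX n).of_iso (homologyQuotientIso X n).symm

theorem exists_homologyMap_single_eq (X : CochainComplex 𝒜 ℤ) (n : ℤ) {J : 𝒜} [Injective J]
    (φ : X.homology n ⟶ J) :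
    ∃ ψ : X ⟶ (HomologicalComplex.single 𝒜 _ n).obj J,
      HomologicalComplex.homologyMap ψ n ≫
        (HomologicalComplex.singleObjHomologySelfIso _ n J).hom = φ := by
  let e : X.opcycles n ⟶ J := Injective.factorThru φ (X.homologyι n)
  let ψ := HomologicalComplex.mkHomToSingle (X.pOpcycles n ≫ e) fun i _ => by
    rw [HomologicalComplex.d_pOpcycles_assoc, zero_comp]
  have hψ : HomologicalComplex.opcyclesMap ψ n ≫
      (HomologicalComplex.singleObjOpcyclesSelfIso _ n J).inv = e := by
    rw [← cancel_epi (X.pOpcycles n), HomologicalComplex.p_opcyclesMap_assoc]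
    simp [ψ]
  refine ⟨ψ, ?_⟩
  rw [← HomologicalComplex.homologyι_singleObjOpcyclesSelfIso_inv,
    HomologicalComplex.homologyι_naturality_assoc, hψ, Injective.comp_factorThru]

/-- The shift `J⟦n⟧` of an object of `𝒜`, regarded as a complex in degree `0`, is `J` placed in
degree `-n`. -/
noncomputable def singleFunctorShiftIso (J : 𝒜) (n : ℤ) :
    ((singleFunctor 𝒜 0).obj J)⟦n⟧ ≅
      (quotient 𝒜 _).obj ((HomologicalComplex.single 𝒜 (.up ℤ) (-n)).obj J) :=
  ((singleFunctors 𝒜).shiftIso n (-n) 0 (by simp)).app J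

theorem isZero_homologyFunctor_singleFunctor_shift (J : 𝒜) {n l : ℤ} (hl : l ≠ -n) :
    IsZero ((homologyFunctor 𝒜 (.up ℤ) l).obj (((singleFunctor 𝒜 0).obj J)⟦n⟧)) :=
  (HomologicalComplex.isZero_single_obj_homology (.up ℤ) (-n) J l hl).of_iso
    ((homologyFunctor 𝒜 _ l).mapIso (singleFunctorShiftIso J n) ≪≫ homologyQuotientIso _ l)

/-- The cohomology of `J⟦n⟧` in its only nonzero degree `-n`. -/
noncomputable def homologySingleFunctorShiftIso (J : 𝒜) (n : ℤ) :
    (homologyFunctor 𝒜 (.up ℤ) (-n)).obj (((singleFunctor 𝒜 0).obj J)⟦n⟧) ≅ J :=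
  (homologyFunctor 𝒜 _ (-n)).mapIso (singleFunctorShiftIso J n) ≪≫
    homologyQuotientIso _ (-n) ≪≫ HomologicalComplex.singleObjHomologySelfIso _ (-n) J

theorem exists_homologyFunctor_map_comp_eq (X : HomotopyCategory 𝒜 (.up ℤ)) (n : ℤ) {J : 𝒜}
    [Injective J] (φ : (homologyFunctor 𝒜 (.up ℤ) (-n)).obj X ⟶ J) :
    ∃ g : X ⟶ ((singleFunctor 𝒜 0).obj J)⟦n⟧,
      (homologyFunctor 𝒜 (.up ℤ) (-n)).map g ≫ (homologySingleFunctorShiftIso J n).hom = φ := by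
  obtain ⟨X, rfl⟩ := HomotopyCategory.quotient_obj_surjective X
  obtain ⟨ψ, hψ⟩ := exists_homologyMap_single_eq X (-n) ((homologyQuotientIso X (-n)).inv ≫ φ)
  refine ⟨(quotient 𝒜 _).map ψ ≫ (singleFunctorShiftIso J n).inv, ?_⟩
  rw [homologySingleFunctorShiftIso, Iso.trans_hom, Iso.trans_hom, Functor.mapIso_hom,
    ← Functor.map_comp_assoc, Category.assoc, Iso.inv_hom_id, Category.comp_id,
    reassoc_of% homologyQuotientIso_hom_naturality ψ (-n), hψ, Iso.hom_inv_id_assoc]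

end Complexes

section DivisionRing

open HomotopyCategory (homologyFunctor singleFunctor)

variable {k : Type u} [DivisionRing k]

/-- `k`, seen as a complex of `k`-modules concentrated in degree `0`. -/
noncomputable abbrev unitComplex (k : Type u) [DivisionRing k] :
    HomotopyCategory (ModuleCat.{u} k) (.up ℤ) :=
  (singleFunctor (ModuleCat.{u} k) 0).obj (ModuleCat.of k k)

/-- The `l`-th cohomology functor over the division ring `k`. -/
noncomputable abbrev cohomology (k : Type u) [DivisionRing k] (l : ℤ) :
    HomotopyCategory (ModuleCat.{u} k) (.up ℤ) ⥤ ModuleCat.{u} k :=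
  homologyFunctor (ModuleCat.{u} k) (.up ℤ) l

theorem exists_forall_epi_cohomology_map {X : HomotopyCategory (ModuleCat.{u} k) (.up ℤ)}
    {n : ℤ} (hX : ¬ IsZero ((cohomology k (-n)).obj X)) :
    ∃ g : X ⟶ (unitComplex k)⟦n⟧, ∀ l, Epi ((cohomology k l).map g) := by
  obtain ⟨φ, hφ⟩ := exists_epi_to_of hX
  obtain ⟨g, rfl⟩ := exists_homologyFunctor_map_comp_eq X n φ
  refine ⟨g, fun l => ?_⟩
  obtain rfl | hl := eq_or_ne l (-n)
  · exact (epi_comp_iff_of_isIso _ _).1 hφ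
  · exact ⟨fun _ _ _ => (isZero_homologyFunctor_singleFunctor_shift _ hl).eq_of_src _ _⟩

-- The dimension is written as a count so that its sum over `n` in a multiset `s` is `s.count (-l)`.
theorem finite_and_finrank_cohomology_shift (n l : ℤ) :
    Module.Finite k ((cohomology k l).obj ((unitComplex k)⟦n⟧)) ∧
      Module.finrank k ((cohomology k l).obj ((unitComplex k)⟦n⟧)) = Multiset.count (-l) {n} := by
  obtain rfl | hl := eq_or_ne l (-n)
  · have e := (homologySingleFunctorShiftIso (ModuleCat.of k k) n).toLinearEquiv
    rw [neg_neg, Multiset.count_singleton_self, e.finrank_eq]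
    exact ⟨.equiv e.symm, Module.finrank_self k⟩
  · have := ModuleCat.subsingleton_of_isZero
      (isZero_homologyFunctor_singleFunctor_shift (ModuleCat.of k k) hl)
    rw [Multiset.count_singleton, if_neg (by rwa [neg_eq_iff_eq_neg])]
    exact ⟨inferInstance, Module.finrank_zero_of_subsingleton⟩

theorem finite_and_finrank_cohomology_le_count {s : Multiset ℤ}
    {X : HomotopyCategory (ModuleCat.{u} k) (.up ℤ)} (hX : IsBuiltFrom (unitComplex k) s X)
    (l : ℤ) :
    Module.Finite k ((cohomology k l).obj X) ∧
      Module.finrank k ((cohomology k l).obj X) ≤ s.count (-l) := by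
  convert hX.finite_and_finrank_le (cohomology k l)
    fun n => (finite_and_finrank_cohomology_shift n l).1 using 2
  simp_rw [finite_and_finrank_cohomology_shift]
  rw [← Multiset.count_sum, Multiset.sum_map_singleton]

theorem exists_distTriang_finrank_eq {X : HomotopyCategory (ModuleCat.{u} k) (.up ℤ)} {n : ℤ}
    (hX : ¬ IsZero ((cohomology k (-n)).obj X))
    (hfin : ∀ l, Module.Finite k ((cohomology k l).obj X)) :
    ∃ (A : HomotopyCategory (ModuleCat.{u} k) (.up ℤ)) (f : A ⟶ X) (g : X ⟶ (unitComplex k)⟦n⟧)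
      (h : (unitComplex k)⟦n⟧ ⟶ A⟦(1 : ℤ)⟧), Triangle.mk f g h ∈ distTriang _ ∧
      ∀ l, Module.Finite k ((cohomology k l).obj A) ∧
        Module.finrank k ((cohomology k l).obj X) =
          Module.finrank k ((cohomology k l).obj A) + Multiset.count (-l) {n} := by
  obtain ⟨g, hg⟩ := exists_forall_epi_cohomology_map hX
  obtain ⟨A, f, h, hT⟩ := distinguished_cocone_triangle₁ g
  refine ⟨A, f, g, h, hT, fun l => ?_⟩
  rw [← (finite_and_finrank_cohomology_shift (k := k) n l).2]
  -- `(cohomology k 0).shift l` is `cohomology k l` by definition.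
  exact finite_X₁_and_finrank_X₂_eq_of_shortExact
    (shortExact_map_shift_of_epi (cohomology k 0) _ hT (l - 1) l (sub_add_cancel l 1)
      (hg (l - 1)) (hg l)) (hfin l)

theorem isBuiltFrom_of_finrank_eq_count {s : Multiset ℤ}
    {X : HomotopyCategory (ModuleCat.{u} k) (.up ℤ)}
    (hfin : ∀ l, Module.Finite k ((cohomology k l).obj X))
    (hs : ∀ l, Module.finrank k ((cohomology k l).obj X) = s.count (-l)) :
    IsBuiltFrom (unitComplex k) s X := by
  induction s using Multiset.induction_on generalizing X with
  | empty =>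
    refine .zero (isZero_of_isZero_homologyFunctor_obj X fun l => ?_)
    rw [ModuleCat.isZero_iff_subsingleton]
    exact Module.finrank_zero_iff.1 (hs l)
  | cons n s ih =>
    have hX : ¬ IsZero ((cohomology k (-n)).obj X) := fun h => by
      have := ModuleCat.subsingleton_of_isZero h
      simpa [Module.finrank_zero_of_subsingleton] using hs (-n)
    obtain ⟨A, f, g, h, hT, hA⟩ := exists_distTriang_finrank_eq hX hfin
    refine .cons f g h hT (ih (fun l => (hA l).1) fun l => ?_)
    rw [← Nat.add_right_cancel_iff, ← (hA l).2, hs, ← Multiset.count_add, add_comm,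
      Multiset.singleton_add]

theorem statement_6_general (X : HomotopyCategory (ModuleCat.{u} k) (.up ℤ))
    (hbdd : {l : ℤ | ¬ IsZero ((cohomology k l).obj X)}.Finite)
    (hfin : ∀ l : ℤ, Module.Finite k ((cohomology k l).obj X)) (t : ℝ) :
    complexity _ t (unitComplex k) X =
      ∑' l : ℤ, ENNReal.ofReal
        ((Module.finrank k ((cohomology k l).obj X) : ℝ) * Real.exp (-(l : ℝ) * t)) := by
  let d (l : ℤ) : ℕ := Module.finrank k ((cohomology k l).obj X)
  obtain ⟨s, hs⟩ : ∃ s : Multiset ℤ, ∀ l, d l = s.count (-l) := by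
    refine ⟨∑ l ∈ hbdd.toFinset, Multiset.replicate (d l) (-l), fun l => ?_⟩
    have hd : IsZero ((cohomology k l).obj X) → d l = 0 := fun h =>
      have := ModuleCat.subsingleton_of_isZero h
      Module.finrank_zero_of_subsingleton
    simpa [Multiset.count_sum', Multiset.count_replicate] using hd
  have hX := isBuiltFrom_of_finrank_eq_count hfin hs
  rw [hX.complexity_eq_cost, cost_eq_tsum_count, ← (Equiv.neg ℤ).tsum_eq]
  · refine tsum_congr fun l => ?_
    rw [Equiv.neg_apply, ← hs, Int.cast_neg]
  · refine fun {s' Y} hY r => cost_mono t (Multiset.le_iff_count.2 fun n => ?_)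
    obtain ⟨hYfin, hYs⟩ := finite_and_finrank_cohomology_le_count hY (-n)
    rw [← neg_neg n, ← hs]
    exact (finrank_le_of_retract (r.map (cohomology k (-n)))).trans hYs

end DivisionRing

/-- For every object `M` of `D^b(ℂ)`,
`δ_(D^b(ℂ),t)(ℂ, M) = Σ_{l ∈ ℤ} (dim_ℂ H^l(M)) · e^{-l t}`. -/
theorem statement_6 (M : KVect)
    (hbdd : {l : ℤ | ¬ IsZero ((Hl l).obj M)}.Finite)
    (hfd : ∀ l : ℤ, FiniteDimensional ℂ ((Hl l).obj M))
    (t : ℝ) :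
    complexity KVect t CC M =
      ∑' l : ℤ, ENNReal.ofReal
        ((Module.finrank ℂ ((Hl l).obj M) : ℝ) * Real.exp (-(l : ℝ) * t)) :=
  statement_6_general M hbdd hfd t

end DbC

end CatEntropy
end
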